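/- arXiv:2504.11854 — 8 statements merged into one kernel-verified Lean document; each statement's English description precedes it below -/
import Mathlib

section
/- For any DAO with member valuations v_1 ≥ v_2 ≥ ⋯ ≥ v_n ≥ 0 and any grouping 𝒢 = {G^1,…,G^k} of {1,…,n} into k nonempty subgroups, there exists a continuous grouping 𝒢̄ = {Ḡ^1,…,Ḡ^k} of {1,…,n} into k nonempty subgroups such that WTP_total(𝒢̄) ≥ WTP_total(𝒢). -/
open scoped Classical

noncomputable section

/-- The willingness to pay of a subgroup `S` of members, where `v` lists the members'
valuations (non-increasing in the index): `WTP(S) = max_{1 ≤ i ≤ |S|} i · w_i`, where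
`w_1 ≥ ⋯ ≥ w_m` are the valuations of the members of `S` in non-increasing order.
Since `v` is non-increasing, the rank of member `a` in `S` is `|{c ∈ S : c ≤ a}|`. -/
def WTP (v : ℕ → ℝ) (S : Finset ℕ) : ℝ :=
  sSup ((fun a => ((S.filter (fun c => c ≤ a)).card : ℝ) * v a) '' (S : Set ℕ))

/-- The total willingness to pay of a grouping `𝒢`: listing the subgroup values
non-increasingly as `W_1 ≥ ⋯ ≥ W_k`, it is `max_{1 ≤ j ≤ k} j · W_j`.  Equivalently,
it is the max over `G ∈ 𝒢` of `|{G' ∈ 𝒢 : WTP(G') ≥ WTP(G)}| · WTP(G)`. -/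
def WTPtotal (v : ℕ → ℝ) (𝒢 : Finset (Finset ℕ)) : ℝ :=
  sSup ((fun G => ((𝒢.filter (fun G' => WTP v G ≤ WTP v G')).card : ℝ) * WTP v G) ''
    (𝒢 : Set (Finset ℕ)))

/-- `𝒢` is a grouping of the members `{1, …, n}`: a partition into nonempty subgroups. -/
def IsGrouping (n : ℕ) (𝒢 : Finset (Finset ℕ)) : Prop :=
  (∀ G ∈ 𝒢, G.Nonempty) ∧
  (𝒢 : Set (Finset ℕ)).PairwiseDisjoint id ∧
  𝒢.sup id = Finset.Icc 1 n

/-- A grouping is continuous if every subgroup is a set of consecutive indices. -/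
def ContinuousGrouping (𝒢 : Finset (Finset ℕ)) : Prop :=
  ∀ G ∈ 𝒢, ∀ a ∈ G, ∀ c ∈ G, ∀ b, a ≤ b → b ≤ c → b ∈ G

/-!
Choose in every subgroup `G` a member `a G` with `WTP G = r G * v (a G)`, where `r G` is the rank of
`a G` in `G`, and place consecutive intervals of lengths `r G` in the order of increasing `a G`.
Each `H` placed no later than `G` has `r H` members with index at most `a H ≤ a G`; as the subgroups
are disjoint, the total length up to and including the interval of `G` is at most `a G`. So that
interval consists of `r G` members whose valuations are at least `v (a G)`, and its willingness to
pay is at least that of `G`. The members left over join the last interval.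
-/

section

open Finset

/-- The rank of the member `a` in the subgroup `S`, counted from `1` by index, that is, by
non-increasing valuation: the factor of `v a` in the definition of `WTP`. -/
def memberRank (S : Finset ℕ) (a : ℕ) : ℕ :=
  #{c ∈ S | c ≤ a}

theorem memberRank_pos {S : Finset ℕ} {a : ℕ} (ha : a ∈ S) : 0 < memberRank S a :=
  card_pos.2 ⟨a, mem_filter.2 ⟨ha, le_rfl⟩⟩

theorem memberRank_mul_le_WTP (v : ℕ → ℝ) {S : Finset ℕ} {a : ℕ} (ha : a ∈ S) :
    memberRank S a * v a ≤ WTP v S :=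
  le_csSup (S.finite_toSet.image _).bddAbove ⟨a, ha, rfl⟩

theorem exists_memberRank_mul_eq_WTP (v : ℕ → ℝ) {S : Finset ℕ} (hS : S.Nonempty) :
    ∃ a ∈ S, memberRank S a * v a = WTP v S :=
  ((coe_nonempty.2 hS).image _).csSup_mem (S.finite_toSet.image _)

theorem WTP_nonneg {v : ℕ → ℝ} {S : Finset ℕ} (hv : ∀ a ∈ S, 0 ≤ v a) : 0 ≤ WTP v S :=
  Real.sSup_nonneg <| Set.forall_mem_image.2 fun a ha ↦ mul_nonneg (Nat.cast_nonneg _) (hv a ha)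

theorem card_mul_le_WTPtotal {v : ℕ → ℝ} {𝒜 𝒢 : Finset (Finset ℕ)} {w : ℝ} (h𝒜 : 𝒜 ⊆ 𝒢)
    (hne : 𝒜.Nonempty) (hw : 0 ≤ w) (hle : ∀ G ∈ 𝒜, w ≤ WTP v G) :
    #𝒜 * w ≤ WTPtotal v 𝒢 := by
  obtain ⟨H, hH, hmin⟩ := 𝒜.exists_min_image (WTP v) hne
  have hcard : #𝒜 ≤ #{G ∈ 𝒢 | WTP v H ≤ WTP v G} :=
    card_le_card fun G hG ↦ mem_filter.2 ⟨h𝒜 hG, hmin G hG⟩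
  calc (#𝒜 : ℝ) * w ≤ #{G ∈ 𝒢 | WTP v H ≤ WTP v G} * WTP v H := by gcongr; exact hle H hH
    _ ≤ WTPtotal v 𝒢 := le_csSup (𝒢.finite_toSet.image _).bddAbove ⟨H, h𝒜 hH, rfl⟩

theorem exists_card_mul_eq_WTPtotal (v : ℕ → ℝ) {𝒢 : Finset (Finset ℕ)} (h𝒢 : 𝒢.Nonempty) :
    ∃ G ∈ 𝒢, #{G' ∈ 𝒢 | WTP v G ≤ WTP v G'} * WTP v G = WTPtotal v 𝒢 :=
  ((coe_nonempty.2 h𝒢).image _).csSup_mem (𝒢.finite_toSet.image _)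

theorem WTPtotal_le_WTPtotal_image {v : ℕ → ℝ} {𝒢 : Finset (Finset ℕ)}
    {f : Finset ℕ → Finset ℕ} (hf : Set.InjOn f 𝒢) (h0 : ∀ G ∈ 𝒢, 0 ≤ WTP v G)
    (hle : ∀ G ∈ 𝒢, WTP v G ≤ WTP v (f G)) : WTPtotal v 𝒢 ≤ WTPtotal v (𝒢.image f) := by
  rcases 𝒢.eq_empty_or_nonempty with rfl | h𝒢
  · rw [image_empty]
  obtain ⟨G, hG, hWG⟩ := exists_card_mul_eq_WTPtotal v h𝒢
  set 𝒜 := {G' ∈ 𝒢 | WTP v G ≤ WTP v G'}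
  have h𝒜 : 𝒜 ⊆ 𝒢 := filter_subset _ _
  have hG𝒜 : G ∈ 𝒜 := mem_filter.2 ⟨hG, le_rfl⟩
  rw [← hWG, ← card_image_of_injOn (hf.mono (coe_subset.2 h𝒜))]
  refine card_mul_le_WTPtotal (image_subset_image h𝒜) (Nonempty.image ⟨G, hG𝒜⟩ f) (h0 G hG)
    (forall_mem_image.2 fun G' hG' ↦ ?_)
  exact (mem_filter.1 hG').2.trans (hle G' (h𝒜 hG'))

/-- For a set `P` of cut points, the block of `{1, …, n}` that starts right after `p ∈ P` and ends
at the next cut point, or at `n` if `p` is the last one. -/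
def block (n : ℕ) (P : Finset ℕ) (p : ℕ) : Finset ℕ :=
  {c ∈ Icc 1 n | p < c ∧ ∀ q ∈ P, q < c → q ≤ p}

/-- The subdivision of `{1, …, n}` into consecutive subgroups given by the cut points `P`, which
should include `0`. -/
def blocks (n : ℕ) (P : Finset ℕ) : Finset (Finset ℕ) :=
  P.image (block n P)

section Blocks

variable {n p : ℕ} {P : Finset ℕ}

theorem mem_block {c : ℕ} : c ∈ block n P p ↔ c ≤ n ∧ p < c ∧ ∀ q ∈ P, q < c → q ≤ p := by
  simp only [block, mem_filter, mem_Icc]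
  grind

theorem succ_mem_block (hp : p < n) : p + 1 ∈ block n P p :=
  mem_block.2 ⟨hp, p.lt_succ_self, fun _ _ ↦ Nat.le_of_lt_succ⟩

theorem pairwiseDisjoint_block (n : ℕ) (P : Finset ℕ) :
    (P : Set ℕ).PairwiseDisjoint (block n P) := by
  refine fun p hp q hq hpq ↦ disjoint_left.2 fun c hcp hcq ↦ hpq ?_
  obtain ⟨-, hpc, hp_max⟩ := mem_block.1 hcp
  obtain ⟨-, hqc, hq_max⟩ := mem_block.1 hcq
  exact le_antisymm (hq_max p hp hpc) (hp_max q hq hqc)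

theorem block_injOn (hP : ∀ p ∈ P, p < n) : Set.InjOn (block n P) P := fun p hp _ hq h ↦
  (pairwiseDisjoint_block n P).elim_finset hp hq _ (succ_mem_block (hP p hp))
    (h ▸ succ_mem_block (hP p hp))

theorem sup_block (h0 : 0 ∈ P) : P.sup (block n P) = Icc 1 n := by
  refine le_antisymm (Finset.sup_le fun p _ ↦ filter_subset _ _) fun c hc ↦ mem_sup.2 ?_
  obtain ⟨hc_pos, hcn⟩ := mem_Icc.1 hc
  obtain ⟨p, hp, hp_max⟩ := exists_max_image {q ∈ P | q < c} id ⟨0, mem_filter.2 ⟨h0, hc_pos⟩⟩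
  obtain ⟨hpP, hpc⟩ := mem_filter.1 hp
  exact ⟨p, hpP, mem_block.2 ⟨hcn, hpc, fun q hq hqc ↦ hp_max q (mem_filter.2 ⟨hq, hqc⟩)⟩⟩

theorem isGrouping_blocks (h0 : 0 ∈ P) (hP : ∀ p ∈ P, p < n) : IsGrouping n (blocks n P) := by
  refine ⟨forall_mem_image.2 fun p hp ↦ ⟨p + 1, succ_mem_block (hP p hp)⟩, ?_, ?_⟩
  · rw [blocks, coe_image, (block_injOn hP).pairwiseDisjoint_image]
    exact pairwiseDisjoint_block n P
  · rw [blocks, sup_image, Function.id_comp, sup_block h0]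

theorem continuousGrouping_blocks (n : ℕ) (P : Finset ℕ) : ContinuousGrouping (blocks n P) := by
  refine forall_mem_image.2 fun p _ a ha c hc b hab hbc ↦ ?_
  obtain ⟨-, hpa, -⟩ := mem_block.1 ha
  obtain ⟨hcn, -, hp_max⟩ := mem_block.1 hc
  exact mem_block.2
    ⟨hbc.trans hcn, hpa.trans_le hab, fun q hq hqb ↦ hp_max q hq (hqb.trans_le hbc)⟩

theorem memberRank_block {x : ℕ} (hx : x ∈ block n P p) : memberRank (block n P p) x = x - p := by
  obtain ⟨hxn, -, hp_max⟩ := mem_block.1 hx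
  have htrunc : {c ∈ block n P p | c ≤ x} = Ioc p x := by
    ext c
    simp only [mem_filter, mem_block, mem_Ioc]
    exact ⟨fun h ↦ ⟨h.1.2.1, h.2⟩, fun h ↦
      ⟨⟨h.2.trans hxn, h.1, fun q hq hqc ↦ hp_max q hq (hqc.trans_le h.2)⟩, h.2⟩⟩
  rw [memberRank, htrunc, Nat.card_Ioc]

theorem mul_le_WTP_block (v : ℕ → ℝ) {r : ℕ} (hr : 0 < r) (hn : p + r ≤ n)
    (hP : ∀ q ∈ P, p < q → p + r ≤ q) : r * v (p + r) ≤ WTP v (block n P p) := by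
  have hmem : p + r ∈ block n P p :=
    mem_block.2 ⟨hn, by lia, fun q hq hqr ↦ not_lt.1 fun hpq ↦ hqr.not_ge (hP q hq hpq)⟩
  simpa only [memberRank_block hmem, Nat.add_sub_cancel_left] using memberRank_mul_le_WTP v hmem

end Blocks

/-- The left end of the interval of `i` when consecutive intervals of lengths `r j`, `j ∈ s`, are
placed from `0` on in the order of increasing `a j`. -/
def cutPoint {ι : Type*} (s : Finset ι) (r a : ι → ℕ) (i : ι) : ℕ :=
  ∑ j ∈ s with a j < a i, r j

section CutPoint

variable {ι : Type*} {s : Finset ι} {r a : ι → ℕ} {i k : ι}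

theorem cutPoint_mono (h : a i ≤ a k) : cutPoint s r a i ≤ cutPoint s r a k :=
  sum_le_sum_of_subset (monotone_filter_right s fun _ _ hj ↦ hj.trans_le h)

theorem cutPoint_add_eq_sum (s : Finset ι) (r a : ι → ℕ) (i : ι) :
    cutPoint s r a i + r i = ∑ j ∈ insert i {j ∈ s | a j < a i}, r j := by
  rw [sum_insert (by simp), add_comm, cutPoint]

theorem cutPoint_add_le_cutPoint (hi : i ∈ s) (h : a i < a k) :
    cutPoint s r a i + r i ≤ cutPoint s r a k := by
  rw [cutPoint_add_eq_sum]
  refine sum_le_sum_of_subset (insert_subset (mem_filter.2 ⟨hi, h⟩) ?_)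
  exact monotone_filter_right s fun _ _ hj ↦ hj.trans h

theorem cutPoint_add_le_of_lt (hi : i ∈ s) (h : cutPoint s r a i < cutPoint s r a k) :
    cutPoint s r a i + r i ≤ cutPoint s r a k :=
  cutPoint_add_le_cutPoint hi (not_le.1 fun hki ↦ h.not_ge (cutPoint_mono hki))

theorem cutPoint_injOn (ha : Set.InjOn a s) (hr : ∀ i ∈ s, 0 < r i) :
    Set.InjOn (cutPoint s r a) s := by
  have hlt {i k : ι} (hi : i ∈ s) (h : a i < a k) : cutPoint s r a i < cutPoint s r a k :=
    (Nat.lt_add_of_pos_right (hr i hi)).trans_le (cutPoint_add_le_cutPoint hi h)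
  refine fun i hi k hk hik ↦ ha hi hk (le_antisymm ?_ ?_)
  · exact not_lt.1 fun h ↦ (hlt hk h).ne' hik
  · exact not_lt.1 fun h ↦ (hlt hi h).ne hik

theorem exists_cutPoint_eq_zero (r a : ι → ℕ) (hs : s.Nonempty) :
    ∃ i ∈ s, cutPoint s r a i = 0 := by
  obtain ⟨i, hi, hmin⟩ := s.exists_min_image a hs
  refine ⟨i, hi, ?_⟩
  rw [cutPoint, filter_false_of_mem fun j hj ↦ (hmin j hj).not_gt, sum_empty]

theorem sum_memberRank_le {S : ι → Finset ℕ} {N : ℕ} (hS : (s : Set ι).PairwiseDisjoint S)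
    (hpos : ∀ i ∈ s, 0 ∉ S i) (ha : ∀ i ∈ s, a i ≤ N) :
    ∑ i ∈ s, memberRank (S i) (a i) ≤ N := by
  have hdisj : (s : Set ι).PairwiseDisjoint fun i ↦ {c ∈ S i | c ≤ a i} :=
    fun i hi j hj hij ↦ disjoint_filter_filter (hS hi hj hij)
  have hsub : s.biUnion (fun i ↦ {c ∈ S i | c ≤ a i}) ⊆ Ioc 0 N := by
    refine biUnion_subset.2 fun i hi c hc ↦ mem_Ioc.2 ?_
    obtain ⟨hcS, hca⟩ := mem_filter.1 hc
    exact ⟨Nat.pos_of_ne_zero (ne_of_mem_of_not_mem hcS (hpos i hi)), hca.trans (ha i hi)⟩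
  simpa only [memberRank, card_biUnion hdisj, Nat.card_Ioc, Nat.sub_zero] using card_le_card hsub

theorem cutPoint_add_memberRank_le {S : ι → Finset ℕ} (hS : (s : Set ι).PairwiseDisjoint S)
    (hpos : ∀ i ∈ s, 0 ∉ S i) (hi : i ∈ s) :
    cutPoint s (fun j ↦ memberRank (S j) (a j)) a i + memberRank (S i) (a i) ≤ a i := by
  have hsub : insert i {j ∈ s | a j < a i} ⊆ s := insert_subset hi (filter_subset _ _)
  rw [cutPoint_add_eq_sum s (fun j ↦ memberRank (S j) (a j))]
  refine sum_memberRank_le (hS.subset (coe_subset.2 hsub)) (fun j hj ↦ hpos j (hsub hj)) ?_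
  exact (forall_mem_insert _ _ _).2 ⟨le_rfl, fun j hj ↦ (mem_filter.1 hj).2.le⟩

end CutPoint

theorem IsGrouping.mem_Icc {n c : ℕ} {𝒢 : Finset (Finset ℕ)} {G : Finset ℕ}
    (h𝒢 : IsGrouping n 𝒢) (hG : G ∈ 𝒢) (hc : c ∈ G) : c ∈ Icc 1 n :=
  h𝒢.2.2 ▸ mem_sup.2 ⟨G, hG, hc⟩

theorem exists_continuousGrouping_image_WTP_le {n : ℕ} {v : ℕ → ℝ}
    (hv : AntitoneOn v (Set.Icc 1 n)) {𝒢 : Finset (Finset ℕ)} (h𝒢 : IsGrouping n 𝒢) :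
    ∃ f : Finset ℕ → Finset ℕ, Set.InjOn f 𝒢 ∧ IsGrouping n (𝒢.image f) ∧
      ContinuousGrouping (𝒢.image f) ∧ ∀ G ∈ 𝒢, WTP v G ≤ WTP v (f G) := by
  rcases 𝒢.eq_empty_or_nonempty with rfl | hnonempty
  · exact ⟨id, by simpa [ContinuousGrouping] using h𝒢⟩
  choose! a haG haW using fun G hG ↦ exists_memberRank_mul_eq_WTP v (h𝒢.1 G hG)
  have ha G (hG : G ∈ 𝒢) : 1 ≤ a G ∧ a G ≤ n := mem_Icc.1 (h𝒢.mem_Icc hG (haG G hG))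
  have ha_inj : Set.InjOn a 𝒢 := fun G hG H hH h ↦
    h𝒢.2.1.elim_finset hG hH _ (haG G hG) (h ▸ haG H hH)
  let r G := memberRank G (a G)
  let p := cutPoint 𝒢 r a
  let P := 𝒢.image p
  have hr G (hG : G ∈ 𝒢) : 0 < r G := memberRank_pos (haG G hG)
  have hpa G (hG : G ∈ 𝒢) : p G + r G ≤ a G :=
    cutPoint_add_memberRank_le h𝒢.2.1
      (fun H hH h0 ↦ (mem_Icc.1 (h𝒢.mem_Icc hH h0)).1.not_gt one_pos) hG
  have hP : ∀ q ∈ P, q < n := forall_mem_image.2 fun G hG ↦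
    (Nat.lt_add_of_pos_right (hr G hG)).trans_le ((hpa G hG).trans (ha G hG).2)
  have h0 : 0 ∈ P := mem_image.2 (exists_cutPoint_eq_zero r a hnonempty)
  have himage : 𝒢.image (block n P ∘ p) = blocks n P := image_image.symm
  refine ⟨block n P ∘ p, ?_, himage ▸ isGrouping_blocks h0 hP,
    himage ▸ continuousGrouping_blocks n P, fun G hG ↦ ?_⟩
  · exact (block_injOn hP).comp (cutPoint_injOn ha_inj hr) fun G hG ↦ mem_image_of_mem p hG
  · have hvle : v (a G) ≤ v (p G + r G) :=
      hv ⟨(hr G hG).trans_le (Nat.le_add_left _ _), (hpa G hG).trans (ha G hG).2⟩ (ha G hG)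
        (hpa G hG)
    calc WTP v G = r G * v (a G) := (haW G hG).symm
      _ ≤ r G * v (p G + r G) := by gcongr
      _ ≤ WTP v (block n P (p G)) :=
        mul_le_WTP_block v (hr G hG) ((hpa G hG).trans (ha G hG).2)
          (forall_mem_image.2 fun H _ ↦ cutPoint_add_le_of_lt hG)

end

/-- Theorem 1: for any DAO with valuations `v_1 ≥ ⋯ ≥ v_n ≥ 0`
and any grouping `𝒢` of `{1,…,n}` into `k` nonempty subgroups, there is a continuous
grouping `𝒢'` into `k` nonempty subgroups with `WTP_total(𝒢') ≥ WTP_total(𝒢)`. -/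
theorem stmt0 (n : ℕ) (v : ℕ → ℝ)
    (hmono : ∀ i j, 1 ≤ i → i ≤ j → j ≤ n → v j ≤ v i)
    (hnonneg : ∀ i, 1 ≤ i → i ≤ n → 0 ≤ v i)
    (𝒢 : Finset (Finset ℕ)) (hG : IsGrouping n 𝒢) :
    ∃ 𝒢' : Finset (Finset ℕ),
      IsGrouping n 𝒢' ∧ ContinuousGrouping 𝒢' ∧ 𝒢'.card = 𝒢.card ∧
      WTPtotal v 𝒢 ≤ WTPtotal v 𝒢' := by
  have hv : AntitoneOn v (Set.Icc 1 n) := fun i hi j hj hij ↦ hmono i j hi.1 hij hj.2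
  obtain ⟨f, hf, hgrouping, hcont, hle⟩ := exists_continuousGrouping_image_WTP_le hv hG
  have hWTP : ∀ G ∈ 𝒢, 0 ≤ WTP v G := fun G hG𝒢 ↦ WTP_nonneg fun c hc ↦
    have hc := Finset.mem_Icc.1 (hG.mem_Icc hG𝒢 hc)
    hnonneg c hc.1 hc.2
  exact ⟨𝒢.image f, hgrouping, hcont, Finset.card_image_of_injOn hf,
    WTPtotal_le_WTPtotal_image hf hWTP hle⟩

end
end

section
/- Let v_1 ≥ v_2 ≥ ⋯ ≥ v_n ≥ 0 and let CV > 0. If the greedy procedure with threshold CV closes subgroups Ĝ^1,…,Ĝ^k (in order of member indices) with sizes n̂^1,…,n̂^k, then n̂^1 ≤ n̂^2 ≤ ⋯ ≤ n̂^k. -/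
open scoped Classical

noncomputable section

/-- `GreedyBoundaries v n CV k N` says that the greedy procedure with threshold `CV`,
scanning members `1, …, n` (with valuations `v_1 ≥ ⋯ ≥ v_n`) in order, closes exactly
`k` subgroups, the `j`-th closed subgroup being `Ĝ^j = {N_{j-1}+1, …, N_j}`:
a subgroup is closed the first time its size `s` and last-added member `i`
satisfy `s · v_i ≥ CV`, and the members after `N_k` never close a subgroup. -/
def GreedyBoundaries (v : ℕ → ℝ) (n : ℕ) (CV : ℝ) (k : ℕ) (N : ℕ → ℕ) : Prop :=
  N 0 = 0 ∧
  (∀ j, 1 ≤ j → j ≤ k →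
    N (j - 1) < N j ∧ N j ≤ n ∧
    CV ≤ ((N j - N (j - 1) : ℕ) : ℝ) * v (N j) ∧
    (∀ i, N (j - 1) < i → i < N j → ((i - N (j - 1) : ℕ) : ℝ) * v i < CV)) ∧
  (∀ i, N k < i → i ≤ n → ((i - N k : ℕ) : ℝ) * v i < CV)

/-- The members at which a subgroup started right after member `a` meets the closing rule `P`,
where `P s i` says that a subgroup of size `s` with last-added member `i` may be closed. The greedy
procedure closes this subgroup at the least such member; an arbitrary `P` stands in for
`s · v_i ≥ CV`. -/
def closingMembers (P : ℕ → ℕ → Prop) (a : ℕ) : Set ℕ :=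
  {i | a < i ∧ P (i - a) i}

/- The earlier subgroup `(a, b]` would reach the size `c - b` of the later one `(b, c]` at member
`a + (c - b) ≤ c`, where `P` allows closing it because `P` does so at `c`. -/
theorem sub_le_sub_of_isLeast_closingMembers {P : ℕ → ℕ → Prop} {a b c : ℕ}
    (hP : ∀ s, AntitoneOn (P s) (Set.Ici 1))
    (hb : IsLeast (closingMembers P a) b) (hc : c ∈ closingMembers P b) :
    b - a ≤ c - b := by
  obtain ⟨hab, -⟩ := hb.1
  obtain ⟨hbc, hPc⟩ := hc
  have hPearly : P (c - b) (a + (c - b)) :=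
    hP (c - b) (Set.mem_Ici.2 (by omega)) (Set.mem_Ici.2 (by omega)) (by omega) hPc
  have hearly : a + (c - b) ∈ closingMembers P a :=
    ⟨by omega, by rwa [Nat.add_sub_cancel_left]⟩
  exact Nat.sub_le_iff_le_add'.2 (hb.2 hearly)

theorem stmt2_general {P : ℕ → ℕ → Prop} (hP : ∀ s, AntitoneOn (P s) (Set.Ici 1))
    {k : ℕ} {N : ℕ → ℕ}
    (hN : ∀ j ∈ Set.Icc 1 k, IsLeast (closingMembers P (N (j - 1))) (N j)) :
    MonotoneOn (fun j ↦ N j - N (j - 1)) (Set.Icc 1 k) :=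
  monotoneOn_of_le_add_one Set.ordConnected_Icc fun j _ hj hj' ↦
    sub_le_sub_of_isLeast_closingMembers hP (hN j hj) (hN (j + 1) hj').1

theorem GreedyBoundaries.isLeast_closingMembers {v : ℕ → ℝ} {n : ℕ} {CV : ℝ} {k : ℕ}
    {N : ℕ → ℕ} (h : GreedyBoundaries v n CV k N) {j : ℕ} (hj : j ∈ Set.Icc 1 k) :
    IsLeast (closingMembers (fun s i ↦ i ≤ n ∧ CV ≤ s * v i) (N (j - 1))) (N j) := by
  obtain ⟨-, hclosed, -⟩ := h
  obtain ⟨hlt, hle, hreach, hfirst⟩ := hclosed j hj.1 hj.2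
  exact ⟨⟨hlt, hle, hreach⟩, fun i ⟨hi, _, hCVi⟩ ↦
    not_lt.1 fun hij ↦ (hfirst i hi hij).not_ge hCVi⟩

/- With `i ≤ n` built into the rule, the values of `v` beyond `n` do not matter. -/
theorem antitoneOn_le_and_le_mul {v : ℕ → ℝ} {n : ℕ}
    (hmono : ∀ i j, 1 ≤ i → i ≤ j → j ≤ n → v j ≤ v i) (CV : ℝ) (s : ℕ) :
    AntitoneOn (fun i ↦ i ≤ n ∧ CV ≤ s * v i) (Set.Ici 1) :=
  fun i hi j _ hij ⟨hjn, hCVj⟩ ↦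
    ⟨hij.trans hjn, hCVj.trans (mul_le_mul_of_nonneg_left (hmono i j hi hij hjn) s.cast_nonneg)⟩

/-- Lemma 1: the sizes `n̂^j = N_j − N_{j-1}` of the subgroups closed
by the greedy procedure with threshold `CV > 0` are non-decreasing:
`n̂^1 ≤ n̂^2 ≤ ⋯ ≤ n̂^k`. -/
theorem stmt2 (n : ℕ) (v : ℕ → ℝ)
    (hmono : ∀ i j, 1 ≤ i → i ≤ j → j ≤ n → v j ≤ v i)
    (hnonneg : ∀ i, 1 ≤ i → i ≤ n → 0 ≤ v i)
    (CV : ℝ) (hCV : 0 < CV) (k : ℕ) (N : ℕ → ℕ)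
    (hgreedy : GreedyBoundaries v n CV k N) :
    ∀ j₁ j₂, 1 ≤ j₁ → j₁ ≤ j₂ → j₂ ≤ k →
      N j₁ - N (j₁ - 1) ≤ N j₂ - N (j₂ - 1) := by
  intro j₁ j₂ h₁ h₁₂ h₂
  exact stmt2_general (antitoneOn_le_and_le_mul hmono CV)
    (fun _ hj ↦ hgreedy.isLeast_closingMembers hj) ⟨h₁, h₁₂.trans h₂⟩ ⟨h₁.trans h₁₂, h₂⟩ h₁₂

end
end

section
/- Let v_1 ≥ v_2 ≥ ⋯ ≥ v_n ≥ 0 and CV > 0, and let Ĝ^1,…,Ĝ^k be the closed subgroups of the greedy procedure with threshold CV, with end indices N̂^1 < ⋯ < N̂^k. Let Ḡ^1,…,Ḡ^m be pairwise disjoint sets of consecutive indices in {1,…,n}, listed in increasing order of indices, each satisfying WTP(Ḡ^j) ≥ CV, and let N̄^j = max Ḡ^j. Then m ≤ k, and N̂^j ≤ N̄^j for every j ≤ m. In particular, the greedy procedure produces the maximum possible number of pairwise disjoint consecutive-index subgroups each of willingness to pay at least CV. -/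
open scoped Classical

noncomputable section

/-!
Greedy stays ahead. If greedy has closed its `j`-th subgroup before `S` starts, then the member
at which `S` attains its willingness to pay has in greedy's current subgroup at least the rank it
has in `S`. Hence greedy closes its next subgroup no later than at that member.
-/

section

variable {v : ℕ → ℝ} {n : ℕ} {CV : ℝ} {k : ℕ} {N : ℕ → ℕ} {S : Finset ℕ}

theorem exists_WTP_eq (v : ℕ → ℝ) (hS : S.Nonempty) :
    ∃ i ∈ S, WTP v S = ((S.filter (fun c => c ≤ i)).card : ℝ) * v i := by
  obtain ⟨i, hi, hval⟩ := ((Finset.coe_nonempty.2 hS).image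
    fun i => ((S.filter (fun c => c ≤ i)).card : ℝ) * v i).csSup_mem (S.finite_toSet.image _)
  exact ⟨i, hi, hval.symm⟩

theorem nonempty_of_WTP_pos (h : 0 < WTP v S) : S.Nonempty := by
  rw [Finset.nonempty_iff_ne_empty]
  rintro rfl
  simp [WTP] at h

theorem card_filter_le_le_sub {a : ℕ} (hS : ∀ c ∈ S, a < c) (i : ℕ) :
    (S.filter (fun c => c ≤ i)).card ≤ i - a := by
  have hsub : S.filter (fun c => c ≤ i) ⊆ Finset.Ioc a i := fun c hc => by
    obtain ⟨hcS, hci⟩ := Finset.mem_filter.1 hc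
    exact Finset.mem_Ioc.2 ⟨hS c hcS, hci⟩
  simpa only [Nat.card_Ioc] using Finset.card_le_card hsub

theorem exists_le_sub_mul_of_le_WTP (hCV : 0 < CV) {a : ℕ} (hS : ∀ c ∈ S, a < c)
    (h : CV ≤ WTP v S) : ∃ i ∈ S, CV ≤ ((i - a : ℕ) : ℝ) * v i := by
  obtain ⟨i, hi, hval⟩ := exists_WTP_eq v (nonempty_of_WTP_pos (hCV.trans_le h))
  rw [hval] at h
  have hvi : 0 < v i := pos_of_mul_pos_right (hCV.trans_le h) (Nat.cast_nonneg _)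
  refine ⟨i, hi, h.trans ?_⟩
  gcongr
  exact card_filter_le_le_sub hS i

namespace GreedyBoundaries

theorem lt_and_succ_le_of_le_sub_mul (hgreedy : GreedyBoundaries v n CV k N) {j i : ℕ}
    (hjk : j ≤ k) (hji : N j < i) (hin : i ≤ n) (hi : CV ≤ ((i - N j : ℕ) : ℝ) * v i) :
    j < k ∧ N (j + 1) ≤ i := by
  obtain ⟨-, hclosed, hrest⟩ := hgreedy
  have hlt : j < k := by
    refine hjk.lt_of_ne ?_
    rintro rfl
    exact (hrest i hji hin).not_ge hi
  obtain ⟨-, -, -, hfirst⟩ := hclosed (j + 1) (Nat.succ_pos j) hlt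
  exact ⟨hlt, not_lt.1 fun hiN => (hfirst i hji hiN).not_ge hi⟩

theorem lt_and_exists_succ_le (hgreedy : GreedyBoundaries v n CV k N) (hCV : 0 < CV) {j : ℕ}
    (hjk : j ≤ k) (hS : S ⊆ Finset.Ioc (N j) n) (hwtp : CV ≤ WTP v S) :
    j < k ∧ ∃ i ∈ S, N (j + 1) ≤ i := by
  obtain ⟨i, hiS, hi⟩ :=
    exists_le_sub_mul_of_le_WTP hCV (fun c hc => (Finset.mem_Ioc.1 (hS hc)).1) hwtp
  obtain ⟨hji, hin⟩ := Finset.mem_Ioc.1 (hS hiS)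
  obtain ⟨hlt, hNi⟩ := hgreedy.lt_and_succ_le_of_le_sub_mul hjk hji hin hi
  exact ⟨hlt, i, hiS, hNi⟩

end GreedyBoundaries

theorem stmt3_general (hCV : 0 < CV) (hgreedy : GreedyBoundaries v n CV k N)
    {m : ℕ} {G : ℕ → Finset ℕ} (hG : ∀ j, 1 ≤ j → j ≤ m → G j ⊆ Finset.Icc 1 n)
    (horder : ∀ j, 1 ≤ j → j < m → ∀ a ∈ G j, ∀ b ∈ G (j + 1), a < b)
    (hwtp : ∀ j, 1 ≤ j → j ≤ m → CV ≤ WTP v (G j)) :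
    m ≤ k ∧ ∀ j, 1 ≤ j → j ≤ m → ∃ i ∈ G j, N j ≤ i := by
  have stays_ahead : ∀ j ≤ m, j ≤ k ∧ (1 ≤ j → ∃ i ∈ G j, N j ≤ i) := by
    intro j
    induction j with
    | zero => simp
    | succ j ih =>
      intro hj
      obtain ⟨hjk, hN⟩ := ih (by omega)
      have hsub : G (j + 1) ⊆ Finset.Ioc (N j) n := by
        intro b hb
        obtain ⟨hb_pos, hbn⟩ := Finset.mem_Icc.1 (hG (j + 1) (by omega) hj hb)
        refine Finset.mem_Ioc.2 ⟨?_, hbn⟩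
        rcases Nat.eq_zero_or_pos j with rfl | hj_pos
        · exact hgreedy.1.trans_lt hb_pos
        · obtain ⟨a, ha, hNa⟩ := hN hj_pos
          exact hNa.trans_lt (horder j hj_pos hj a ha b hb)
      obtain ⟨hlt, hNsucc⟩ :=
        hgreedy.lt_and_exists_succ_le hCV hjk hsub (hwtp (j + 1) (by omega) hj)
      exact ⟨hlt, fun _ => hNsucc⟩
  exact ⟨(stays_ahead m le_rfl).1, fun j hj hjm => (stays_ahead j hjm).2 hj⟩

end

/-- the greedy procedure with threshold `CV` is optimal.  If
`Ḡ^1, …, Ḡ^m` are pairwise disjoint consecutive-index subgroups of `{1,…,n}` (given by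
their endpoints `Ḡ^j = {s_j, …, e_j}`, listed in increasing order of indices), each
with `WTP(Ḡ^j) ≥ CV`, then `m ≤ k` and the greedy end index `N_j` satisfies
`N_j ≤ e_j = max Ḡ^j` for every `j ≤ m`.  In particular, greedy produces the maximum
possible number of pairwise disjoint consecutive-index subgroups of WTP at least `CV`. -/
theorem stmt3 (n : ℕ) (v : ℕ → ℝ)
    (hmono : ∀ i j, 1 ≤ i → i ≤ j → j ≤ n → v j ≤ v i)
    (hnonneg : ∀ i, 1 ≤ i → i ≤ n → 0 ≤ v i)
    (CV : ℝ) (hCV : 0 < CV) (k : ℕ) (N : ℕ → ℕ)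
    (hgreedy : GreedyBoundaries v n CV k N)
    (m : ℕ) (s e : ℕ → ℕ)
    (hint : ∀ j, 1 ≤ j → j ≤ m → 1 ≤ s j ∧ s j ≤ e j ∧ e j ≤ n)
    (horder : ∀ j, 1 ≤ j → j < m → e j < s (j + 1))
    (hwtp : ∀ j, 1 ≤ j → j ≤ m → CV ≤ WTP v (Finset.Icc (s j) (e j))) :
    m ≤ k ∧ ∀ j, 1 ≤ j → j ≤ m → N j ≤ e j := by
  obtain ⟨hmk, hN⟩ := stmt3_general hCV hgreedy
    (fun j hj hjm => Finset.Icc_subset_Icc (hint j hj hjm).1 (hint j hj hjm).2.2)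
    (fun j hj hjm a ha b hb =>
      (Finset.mem_Icc.1 ha).2.trans_lt ((horder j hj hjm).trans_le (Finset.mem_Icc.1 hb).1)) hwtp
  exact ⟨hmk, fun j hj hjm => (hN j hj hjm).elim fun i h => h.2.trans (Finset.mem_Icc.1 h.1).2⟩

end
end

section
/- Let v_1 ≥ v_2 ≥ ⋯ ≥ v_n ≥ 0 and a price P with 0 < P ≤ max_{1≤i≤n} i·v_i, and set i* = max{ i : i·v_i ≥ P }. Let 𝒢 = {G^1,…,G^k} be the optimal grouping output by Algorithm 1 (the greedy grouping with the opt_WTP-maximizing threshold opt_CV, with the leftover tail merged into the last subgroup, so that WTP_total(𝒢) = k·opt_CV = opt_WTP). Apply the two-level allocation at price P: ordering the subgroups by WTP non-increasingly as W_1 ≥ ⋯ ≥ W_k, set j* = max{ j : j·W_j ≥ P }; the j* highest-WTP subgroups get access, each paying P/j*; within an accessing subgroup with member valuations w_1 ≥ ⋯ ≥ w_m, exactly the members of rank t ≤ max{ s : s·w_s ≥ P/j* } get access. Then j* = k (all k subgroups get access), and every member i with i ≤ i* gets access. In particular, the access set of 𝒢 contains the access set {1,…,i*} of the degenerate grouping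 {{1,…,n}}, i.e. 𝒢 is less-excludable than the degenerate grouping. -/
open scoped Classical

noncomputable section

/-!
A closed greedy subgroup has a member whose rank times valuation reaches the threshold `CV`, and
`P / k ≤ CV` because the degenerate grouping, which affords `P`, cannot beat the optimum `k * CV`.
So every subgroup pays its share, and only members of the merged tail `N k < i ≤ n` could lose
access.

Since valuations never increase, closed subgroups never shrink: otherwise the longer of two adjacent
ones would have been closed earlier. Hence `N (k - 1) ≤ (k - 1) * (N k - N (k - 1))`, so a tail
member `m` has rank `m - N (k - 1) ≥ m / k` in the last subgroup, and `m * v m ≥ P` already gives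
`(m - N (k - 1)) * v m ≥ P / k`.
-/

section Access

variable {v : ℕ → ℝ} {S : Finset ℕ} {i j n : ℕ} {p q : ℝ}

/-- The member `i` of the subgroup `S` gets access when `S` is charged `p` in total: `i` does not
come after the last member of `S` whose rank times valuation reaches `p`. Membership `i ∈ S` is not
part of the notion. -/
def HasAccess (v : ℕ → ℝ) (p : ℝ) (S : Finset ℕ) (i : ℕ) : Prop :=
  ∃ a ∈ S, i ≤ a ∧ p ≤ ((S.filter (fun c => c ≤ a)).card : ℝ) * v a

theorem HasAccess.of_le (h : HasAccess v p S j) (hij : i ≤ j) : HasAccess v p S i :=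
  let ⟨a, ha, hja, hp⟩ := h
  ⟨a, ha, hij.trans hja, hp⟩

theorem HasAccess.anti_price (h : HasAccess v q S i) (hpq : p ≤ q) : HasAccess v p S i :=
  let ⟨a, ha, hia, hq⟩ := h
  ⟨a, ha, hia, hpq.trans hq⟩

theorem HasAccess.le_WTP (h : HasAccess v p S i) : p ≤ WTP v S :=
  let ⟨a, ha, _, hp⟩ := h
  hp.trans (le_csSup (S.finite_toSet.image _).bddAbove ⟨a, ha, rfl⟩)

theorem card_filter_le_Icc_succ {m M a : ℕ} (ha : a ≤ M) :
    ((Finset.Icc (m + 1) M).filter (fun c => c ≤ a)).card = a - m := by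
  have : (Finset.Icc (m + 1) M).filter (fun c => c ≤ a) = Finset.Icc (m + 1) a := by
    ext c
    simp only [Finset.mem_filter, Finset.mem_Icc]
    omega
  rw [this, Nat.card_Icc, Nat.add_sub_add_right]

theorem hasAccess_Icc_succ_iff {m M : ℕ} :
    HasAccess v p (Finset.Icc (m + 1) M) i ↔
      ∃ a, m < a ∧ a ≤ M ∧ i ≤ a ∧ p ≤ ((a - m : ℕ) : ℝ) * v a := by
  simp only [HasAccess, Finset.mem_Icc, Nat.succ_le_iff, and_assoc]
  refine exists_congr fun a => and_congr_right fun _ => and_congr_right fun ha => ?_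
  rw [card_filter_le_Icc_succ ha]

theorem hasAccess_Icc_one_iff :
    HasAccess v p (Finset.Icc 1 n) i ↔ ∃ a, 0 < a ∧ a ≤ n ∧ i ≤ a ∧ p ≤ (a : ℝ) * v a :=
  hasAccess_Icc_succ_iff (m := 0)

end Access

theorem WTPtotal_singleton (v : ℕ → ℝ) (S : Finset ℕ) : WTPtotal v {S} = WTP v S := by
  simp [WTPtotal, Finset.filter_singleton]

theorem isGrouping_singleton_Icc {n : ℕ} (hn : 1 ≤ n) : IsGrouping n {Finset.Icc 1 n} :=
  ⟨by simpa using hn, by simp, by simp⟩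

/-- The grouping output by Algorithm 1 from the boundaries `N 0, …, N k` of the greedy procedure:
the closed subgroups `{N (j - 1) + 1, …, N j}` for `1 ≤ j ≤ k`, the last one extended by the
leftover tail up to `n`. It is meaningful for `1 ≤ k` only. -/
def greedyGrouping (N : ℕ → ℕ) (k n : ℕ) : Finset (Finset ℕ) :=
  (Finset.Icc 1 (k - 1)).image (fun j => Finset.Icc (N (j - 1) + 1) (N j)) ∪
    {Finset.Icc (N (k - 1) + 1) n}

theorem mem_greedyGrouping_succ {N : ℕ → ℕ} {k n : ℕ} {G : Finset ℕ} :
    G ∈ greedyGrouping N (k + 1) n ↔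
      (∃ j < k, G = Finset.Icc (N j + 1) (N (j + 1))) ∨ G = Finset.Icc (N k + 1) n := by
  simp only [greedyGrouping, Nat.add_sub_cancel, Finset.mem_union, Finset.mem_image,
    Finset.mem_singleton, Finset.mem_Icc]
  refine or_congr_left ⟨?_, ?_⟩
  · rintro ⟨j, ⟨hj, hjk⟩, rfl⟩
    exact ⟨j - 1, by omega, by rw [Nat.sub_add_cancel hj]⟩
  · rintro ⟨j, hjk, rfl⟩
    exact ⟨j + 1, ⟨by omega, hjk⟩, rfl⟩

namespace GreedyBoundaries

variable {v : ℕ → ℝ} {n k i j m M : ℕ} {CV P : ℝ} {N : ℕ → ℕ} {G : Finset ℕ}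

theorem lt_succ (h : GreedyBoundaries v n CV k N) (hj : j < k) : N j < N (j + 1) :=
  (h.2.1 (j + 1) (by omega) hj).1

theorem succ_le (h : GreedyBoundaries v n CV k N) (hj : j < k) : N (j + 1) ≤ n :=
  (h.2.1 (j + 1) (by omega) hj).2.1

theorem le_size_mul (h : GreedyBoundaries v n CV k N) (hj : j < k) :
    CV ≤ ((N (j + 1) - N j : ℕ) : ℝ) * v (N (j + 1)) :=
  (h.2.1 (j + 1) (by omega) hj).2.2.1

theorem sub_mul_lt (h : GreedyBoundaries v n CV k N) (hj : j < k) (hi : N j < i)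
    (hi' : i < N (j + 1)) : ((i - N j : ℕ) : ℝ) * v i < CV :=
  (h.2.1 (j + 1) (by omega) hj).2.2.2 i hi hi'

theorem size_le_size_succ (h : GreedyBoundaries v n CV k N) (hv : AntitoneOn v (Set.Icc 1 n))
    (hj : j + 1 < k) : N (j + 1) - N j ≤ N (j + 2) - N (j + 1) := by
  by_contra! hlt
  have hnext : N (j + 1) < N (j + 2) := h.lt_succ hj
  have hn : N (j + 2) ≤ n := h.succ_le hj
  set s := N (j + 2) - N (j + 1)
  have hopen : ((N j + s - N j : ℕ) : ℝ) * v (N j + s) < CV :=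
    h.sub_mul_lt (by omega) (by omega) (by omega)
  have hval : v (N (j + 2)) ≤ v (N j + s) :=
    hv ⟨by omega, by omega⟩ ⟨by omega, hn⟩ (by omega)
  rw [Nat.add_sub_cancel_left] at hopen
  exact hopen.not_ge ((h.le_size_mul hj).trans (by gcongr))

theorem boundary_le_mul_size (h : GreedyBoundaries v n CV k N) (hv : AntitoneOn v (Set.Icc 1 n))
    (hj : j < k) : N j ≤ j * (N (j + 1) - N j) := by
  induction j with
  | zero => simp [h.1]
  | succ j ih =>
    have hlt := h.lt_succ (Nat.lt_of_succ_lt hj)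
    calc N (j + 1) = N j + (N (j + 1) - N j) := by omega
      _ ≤ j * (N (j + 1) - N j) + (N (j + 1) - N j) := by gcongr; exact ih (Nat.lt_of_succ_lt hj)
      _ = (j + 1) * (N (j + 1) - N j) := (Nat.succ_mul _ _).symm
      _ ≤ (j + 1) * (N (j + 2) - N (j + 1)) := Nat.mul_le_mul_left _ (h.size_le_size_succ hv hj)

theorem le_mul_sub_of_boundary_le (h : GreedyBoundaries v n CV k N)
    (hv : AntitoneOn v (Set.Icc 1 n)) (hj : j < k) (hm : N (j + 1) ≤ m) :
    m ≤ (j + 1) * (m - N j) := by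
  have hlt := h.lt_succ hj
  calc m = N j + (m - N j) := by omega
    _ ≤ j * (N (j + 1) - N j) + (m - N j) := by gcongr; exact h.boundary_le_mul_size hv hj
    _ ≤ j * (m - N j) + (m - N j) := by gcongr
    _ = (j + 1) * (m - N j) := (Nat.succ_mul _ _).symm

theorem hasAccess_boundary (h : GreedyBoundaries v n CV k N) (hj : j < k) (hM : N (j + 1) ≤ M) :
    HasAccess v CV (Finset.Icc (N j + 1) M) (N (j + 1)) :=
  hasAccess_Icc_succ_iff.2 ⟨_, h.lt_succ hj, hM, le_rfl, h.le_size_mul hj⟩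

theorem hasAccess_of_boundary_le (h : GreedyBoundaries v n CV k N)
    (hv : AntitoneOn v (Set.Icc 1 n)) (hP : 0 ≤ P) (hj : j < k) (hi : N (j + 1) ≤ i)
    (hacc : HasAccess v P (Finset.Icc 1 n) i) :
    HasAccess v (P / ((j + 1 : ℕ) : ℝ)) (Finset.Icc (N j + 1) n) i := by
  obtain ⟨a, ha, han, hia, hPa⟩ := hasAccess_Icc_one_iff.1 hacc
  have hva : 0 ≤ v a := nonneg_of_mul_nonneg_right (hP.trans hPa) (Nat.cast_pos.2 ha)
  have hrank : (a : ℝ) ≤ ((j + 1 : ℕ) : ℝ) * ((a - N j : ℕ) : ℝ) :=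
    mod_cast h.le_mul_sub_of_boundary_le hv hj (hi.trans hia)
  refine hasAccess_Icc_succ_iff.2
    ⟨a, (h.lt_succ hj).trans_le (hi.trans hia), han, hia, ?_⟩
  rw [div_le_iff₀' (by positivity), ← mul_assoc]
  exact hPa.trans (by gcongr)

theorem le_WTP_of_mem_greedyGrouping (h : GreedyBoundaries v n CV (k + 1) N)
    (hG : G ∈ greedyGrouping N (k + 1) n) : CV ≤ WTP v G := by
  rcases mem_greedyGrouping_succ.1 hG with ⟨j, hj, rfl⟩ | rfl
  · exact (h.hasAccess_boundary (Nat.lt_succ_of_lt hj) le_rfl).le_WTP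
  · exact (h.hasAccess_boundary k.lt_succ_self (h.succ_le k.lt_succ_self)).le_WTP

theorem hasAccess_of_mem_greedyGrouping (h : GreedyBoundaries v n CV (k + 1) N)
    (hv : AntitoneOn v (Set.Icc 1 n)) (hP : 0 ≤ P) (hPCV : P / ((k + 1 : ℕ) : ℝ) ≤ CV)
    (hacc : HasAccess v P (Finset.Icc 1 n) i) (hG : G ∈ greedyGrouping N (k + 1) n)
    (hi : i ∈ G) : HasAccess v (P / ((k + 1 : ℕ) : ℝ)) G i := by
  rcases mem_greedyGrouping_succ.1 hG with ⟨j, hj, rfl⟩ | rfl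
  · exact ((h.hasAccess_boundary (Nat.lt_succ_of_lt hj) le_rfl).of_le
      (Finset.mem_Icc.1 hi).2).anti_price hPCV
  · rcases le_total i (N (k + 1)) with hclosed | htail
    · exact ((h.hasAccess_boundary k.lt_succ_self (h.succ_le k.lt_succ_self)).of_le
        hclosed).anti_price hPCV
    · exact h.hasAccess_of_boundary_le hv hP k.lt_succ_self htail hacc

end GreedyBoundaries

theorem stmt5_general {v : ℕ → ℝ} {n k : ℕ} {CV P : ℝ} {N : ℕ → ℕ}
    (hv : AntitoneOn v (Set.Icc 1 n)) (hP : 0 < P) (hgreedy : GreedyBoundaries v n CV k N)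
    (hPCV : P ≤ (k : ℝ) * CV) :
    (∀ G ∈ greedyGrouping N k n, P ≤ (k : ℝ) * WTP v G) ∧
    (∀ i, HasAccess v P (Finset.Icc 1 n) i → ∀ G ∈ greedyGrouping N k n, i ∈ G →
      HasAccess v (P / (k : ℝ)) G i) := by
  cases k with
  | zero => exact absurd hP (by simpa using hPCV)
  | succ k =>
    have hshare : P / ((k + 1 : ℕ) : ℝ) ≤ CV := (div_le_iff₀' (by positivity)).2 hPCV
    refine ⟨fun G hG => hPCV.trans ?_, fun i hacc G hG hi =>
      hgreedy.hasAccess_of_mem_greedyGrouping hv hP.le hshare hacc hG hi⟩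
    gcongr
    exact hgreedy.le_WTP_of_mem_greedyGrouping hG

/-- Theorem 3: let `𝒢` be the optimal grouping output by Algorithm 1,
i.e. the `k` closed greedy subgroups with threshold `opt_CV` (here `CV`), the leftover
tail merged into the last one, with `k · CV = opt_WTP`.  Suppose the winning DAO pays
`P` with `0 < P ≤ max_{1 ≤ i ≤ n} i·v_i` and `i* = max { i : i·v_i ≥ P }`.  Applying
the two-level allocation at price `P`: all `k` subgroups get access (i.e. `j* = k`:
`k · WTP(G) ≥ P` for every subgroup `G`, each paying `P/k`), and every member
`i ≤ i*` gets access within its subgroup (member `i ∈ G` gets access iff its rank in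
`G` is at most `max { s : s · w_s ≥ P/k }`, i.e. iff some `a ∈ G` with `a ≥ i` has
`rank_G(a) · v_a ≥ P/k`).  Hence the access set of `𝒢` contains the access set
`{1,…,i*}` of the degenerate grouping: `𝒢` is less-excludable. -/
theorem stmt5 (n : ℕ) (v : ℕ → ℝ) (hn : 1 ≤ n)
    (hmono : ∀ i j, 1 ≤ i → i ≤ j → j ≤ n → v j ≤ v i)
    (hnonneg : ∀ i, 1 ≤ i → i ≤ n → 0 ≤ v i)
    (P : ℝ) (hP : 0 < P)
    (CV : ℝ) (hCV : 0 < CV) (k : ℕ) (N : ℕ → ℕ) (hk : 1 ≤ k)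
    (hgreedy : GreedyBoundaries v n CV k N)
    (hopt : IsGreatest {W : ℝ | ∃ 𝒢' : Finset (Finset ℕ), IsGrouping n 𝒢' ∧ WTPtotal v 𝒢' = W}
      ((k : ℝ) * CV))
    (𝒢 : Finset (Finset ℕ))
    (h𝒢 : 𝒢 = (Finset.Icc 1 (k - 1)).image (fun j => Finset.Icc (N (j - 1) + 1) (N j)) ∪
            {Finset.Icc (N (k - 1) + 1) n})
    (istar : ℕ) (histar1 : 1 ≤ istar) (histar2 : istar ≤ n)
    (histar3 : P ≤ (istar : ℝ) * v istar)
    (histar4 : ∀ i, 1 ≤ i → i ≤ n → P ≤ (i : ℝ) * v i → i ≤ istar) :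
    (∀ G ∈ 𝒢, P ≤ (k : ℝ) * WTP v G) ∧
    (∀ i, 1 ≤ i → i ≤ istar → ∀ G ∈ 𝒢, i ∈ G →
      ∃ a ∈ G, i ≤ a ∧ P / (k : ℝ) ≤ ((G.filter (fun c => c ≤ a)).card : ℝ) * v a) := by
  have hacc : HasAccess v P (Finset.Icc 1 n) istar :=
    hasAccess_Icc_one_iff.2 ⟨istar, histar1, histar2, le_rfl, histar3⟩
  have hPopt : P ≤ k * CV := hacc.le_WTP.trans
    (hopt.2 ⟨_, isGrouping_singleton_Icc hn, WTPtotal_singleton v _⟩)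
  have hv : AntitoneOn v (Set.Icc 1 n) := fun i hi j hj hij => hmono i j hi.1 hij hj.2
  obtain ⟨hpay, hmem⟩ := stmt5_general hv hP hgreedy hPopt
  subst h𝒢
  exact ⟨hpay, fun i _ hi => hmem i (hacc.of_le hi)⟩

end
end

section
/- Fix true values v_1 ≥ ⋯ ≥ v_n ≥ 0, a collectivism parameter α > 0, and a price P_total > 0. For any feasible parameter group (P_1, P_2, k_1, k_2) for mechanism M_1 under truthful bids (b_i = v_i for all i), every member's collective utility is nonnegative: u_i ≥ 0 for all i ∈ {1,…,n} (individual rationality of M_1). -/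
open scoped Classical

noncomputable section

/-- Feasibility of a parameter group `(P_1, P_2, k_1, k_2)` (with `P_2 = P_1/(1+α)`
determined by `P_1`) for mechanism `M_1`, given non-increasing bids `b_1 ≥ ⋯ ≥ b_n ≥ 0`
and total price `P_total`: `P_1 > 0`, `k_1 = max { i : b_i ≥ P_1 }` (`k_1 = 0` if none),
`k_2 = max { i : b_i ≥ P_2 }`, and budget balance
`k_1 · P_1 + Σ_{i = k_1+1}^{k_2} b_i = P_total`. -/
def Feasible (n : ℕ) (b : ℕ → ℝ) (α Ptotal P1 : ℝ) (k1 k2 : ℕ) : Prop :=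
  0 < P1 ∧ k1 ≤ k2 ∧ k2 ≤ n ∧
  (∀ i, 1 ≤ i → i ≤ k1 → P1 ≤ b i) ∧
  (∀ i, k1 < i → i ≤ n → b i < P1) ∧
  (∀ i, 1 ≤ i → i ≤ k2 → P1 / (1 + α) ≤ b i) ∧
  (∀ i, k2 < i → i ≤ n → b i < P1 / (1 + α)) ∧
  (k1 : ℝ) * P1 + ∑ i ∈ Finset.Icc (k1 + 1) k2, b i = Ptotal

/-- The access of member `i` under mechanism `M_1` with parameters `(P_1, k_1, k_2)`:
full access for `i ≤ k_1`, partial access `b_i / P_1` for `k_1 < i ≤ k_2`, none after. -/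
def xAlloc (b : ℕ → ℝ) (P1 : ℝ) (k1 k2 : ℕ) (i : ℕ) : ℝ :=
  if i ≤ k1 then 1 else if i ≤ k2 then b i / P1 else 0

/-- The payment of member `i` under mechanism `M_1` with parameters `(P_1, k_1, k_2)`:
`P_1` for `i ≤ k_1`, `b_i` for `k_1 < i ≤ k_2`, `0` after. -/
def pay (b : ℕ → ℝ) (P1 : ℝ) (k1 k2 : ℕ) (i : ℕ) : ℝ :=
  if i ≤ k1 then P1 else if i ≤ k2 then b i else 0

/-- The collective utility of member `i` with true values `v`, accesses `x` and
payments `p`: `v_i·x_i − p_i + α·Σ_j v_j·x_j` if `x_i > 0` and `p_i ≤ v_i`;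
`−∞` if `p_i > v_i`; and `−p_i` if `x_i = 0`. -/
def util (n : ℕ) (v : ℕ → ℝ) (α : ℝ) (x p : ℕ → ℝ) (i : ℕ) : EReal :=
  if v i < p i then ⊥
  else if 0 < x i then ((v i * x i - p i + α * ∑ j ∈ Finset.Icc 1 n, v j * x j : ℝ) : EReal)
  else ((-(p i) : ℝ) : EReal)

/-! Member `i`'s own access contributes `α * v i * x i` to the collective term, so the utility is at
least `(1 + α) * v i * x i - p i`. The threshold `P_2 = P_1 / (1 + α)` is exactly the value at which
a truthful member, who buys access `v i / P_1` for `v i`, sees this bound vanish. -/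

section

variable {n : ℕ} {v b x p : ℕ → ℝ} {α Ptotal P1 : ℝ} {k1 k2 i : ℕ}

theorem util_nonneg (hα : 0 ≤ α) (hv : ∀ j ∈ Finset.Icc 1 n, 0 ≤ v j)
    (hx : ∀ j ∈ Finset.Icc 1 n, 0 ≤ x j) (hi : i ∈ Finset.Icc 1 n) (hpv : p i ≤ v i)
    (hp : p i ≤ (1 + α) * (v i * x i)) : 0 ≤ util n v α x p i := by
  rw [util, if_neg hpv.not_gt]
  split_ifs with hxi
  · have own_le_total : v i * x i ≤ ∑ j ∈ Finset.Icc 1 n, v j * x j :=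
      Finset.single_le_sum (fun j hj => mul_nonneg (hv j hj) (hx j hj)) hi
    rw [EReal.coe_nonneg]
    calc 0 ≤ (1 + α) * (v i * x i) - p i := sub_nonneg.2 hp
      _ = v i * x i - p i + α * (v i * x i) := by ring
      _ ≤ v i * x i - p i + α * ∑ j ∈ Finset.Icc 1 n, v j * x j := by gcongr
  · have hxi_zero : x i = 0 := le_antisymm (not_lt.1 hxi) (hx i hi)
    rw [EReal.coe_nonneg, neg_nonneg]
    simpa only [hxi_zero, mul_zero] using hp

namespace Feasible

theorem price_pos (hF : Feasible n b α Ptotal P1 k1 k2) : 0 < P1 := hF.1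

theorem price_le_bid (hF : Feasible n b α Ptotal P1 k1 k2) (hi : 1 ≤ i) (hik : i ≤ k1) :
    P1 ≤ b i := by
  obtain ⟨-, -, -, hk1, -⟩ := hF
  exact hk1 i hi hik

theorem price_div_le_bid (hF : Feasible n b α Ptotal P1 k1 k2) (hi : 1 ≤ i) (hik : i ≤ k2) :
    P1 / (1 + α) ≤ b i := by
  obtain ⟨-, -, -, -, -, hk2, -⟩ := hF
  exact hk2 i hi hik

theorem bid_pos (hF : Feasible n b α Ptotal P1 k1 k2) (hα : 0 ≤ α) (hi : 1 ≤ i) (hik : i ≤ k2) :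
    0 < b i :=
  (div_pos hF.price_pos (by positivity)).trans_le (hF.price_div_le_bid hi hik)

theorem xAlloc_nonneg (hF : Feasible n b α Ptotal P1 k1 k2) (hα : 0 ≤ α) (hi : 1 ≤ i) :
    0 ≤ xAlloc b P1 k1 k2 i := by
  unfold xAlloc
  split_ifs with _ hik
  · exact zero_le_one
  · exact (div_pos (hF.bid_pos hα hi hik) hF.price_pos).le
  · exact le_rfl

theorem pay_le_max (hF : Feasible n b α Ptotal P1 k1 k2) (hi : 1 ≤ i) :
    pay b P1 k1 k2 i ≤ max (b i) 0 := by
  unfold pay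
  split_ifs with hik
  · exact le_max_of_le_left (hF.price_le_bid hi hik)
  · exact le_max_left _ _
  · exact le_max_right _ _

theorem pay_le_mul_xAlloc (hF : Feasible n b α Ptotal P1 k1 k2) (hα : 0 ≤ α) (hi : 1 ≤ i) :
    pay b P1 k1 k2 i ≤ (1 + α) * (b i * xAlloc b P1 k1 k2 i) := by
  have hP := hF.price_pos
  unfold pay xAlloc
  split_ifs with hik1 hik2
  · have price_le := hF.price_le_bid hi hik1
    calc P1 ≤ b i := price_le
      _ ≤ (1 + α) * b i :=
        le_mul_of_one_le_left (hP.le.trans price_le) (le_add_of_nonneg_right hα)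
      _ = (1 + α) * (b i * 1) := by rw [mul_one]
  · have price_le : P1 ≤ (1 + α) * b i :=
      (div_le_iff₀' (by positivity)).1 (hF.price_div_le_bid hi hik2)
    calc b i ≤ b i * ((1 + α) * b i / P1) :=
        le_mul_of_one_le_right (hF.bid_pos hα hi hik2).le ((one_le_div hP).2 price_le)
      _ = (1 + α) * (b i * (b i / P1)) := by ring
  · rw [mul_zero, mul_zero]

end Feasible

theorem stmt7_general (hα : 0 ≤ α) (hv : ∀ j ∈ Finset.Icc 1 n, 0 ≤ v j)
    (hF : Feasible n b α Ptotal P1 k1 k2) (hi : i ∈ Finset.Icc 1 n) (hbv : b i ≤ v i) :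
    0 ≤ util n v α (xAlloc b P1 k1 k2) (pay b P1 k1 k2) i := by
  have access_nonneg : ∀ j ∈ Finset.Icc 1 n, 0 ≤ xAlloc b P1 k1 k2 j :=
    fun j hj => hF.xAlloc_nonneg hα (Finset.mem_Icc.1 hj).1
  have one_le_i := (Finset.mem_Icc.1 hi).1
  refine util_nonneg hα hv access_nonneg hi ?_ ?_
  · exact (hF.pay_le_max one_le_i).trans (max_le hbv (hv i hi))
  · calc pay b P1 k1 k2 i ≤ (1 + α) * (b i * xAlloc b P1 k1 k2 i) :=
        hF.pay_le_mul_xAlloc hα one_le_i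
      _ ≤ (1 + α) * (v i * xAlloc b P1 k1 k2 i) := by
        have access_i_nonneg := access_nonneg i hi
        gcongr

end

/-- individual rationality of `M_1`: for any feasible parameter
group under truthful bids (`b = v`), every member's collective utility is nonnegative. -/
theorem stmt7 (n : ℕ) (v : ℕ → ℝ) (α Ptotal : ℝ)
    (hα : 0 < α) (hPt : 0 < Ptotal)
    (hmono : ∀ i j, 1 ≤ i → i ≤ j → j ≤ n → v j ≤ v i)
    (hnonneg : ∀ i, 1 ≤ i → i ≤ n → 0 ≤ v i)
    (P1 : ℝ) (k1 k2 : ℕ)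
    (hF : Feasible n v α Ptotal P1 k1 k2) :
    ∀ i, 1 ≤ i → i ≤ n →
      (0 : EReal) ≤ util n v α (xAlloc v P1 k1 k2) (pay v P1 k1 k2) i := by
  intro i hi hin
  exact stmt7_general hα.le (fun j hj => hnonneg j (Finset.mem_Icc.1 hj).1 (Finset.mem_Icc.1 hj).2)
    hF (Finset.mem_Icc.2 ⟨hi, hin⟩) le_rfl

end
end

section
/- Let b_1 ≥ ⋯ ≥ b_n ≥ 0 with b_1 > 0, α > 0, and a price P_total with 0 < P_total ≤ WTP_total, where WTP_total = max_{1≤i≤n} Σ_{j=1}^{i} min(b_j, (1+α)·b_i). Then there exists a feasible parameter group (P_1, P_2, k_1, k_2) for mechanism M_1; that is, there exist P_1 > 0, P_2 = P_1/(1+α), k_1 = max{ i : b_i ≥ P_1 } and k_2 = max{ i : b_i ≥ P_2 } ≥ 1 with k_1·P_1 + Σ_{i=k_1+1}^{k_2} b_i = P_total (budget balance). Consequently the payments of M_1 sum exactly to P_total. -/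
open scoped Classical

noncomputable section

/-- The aggregation function of mechanism `M_1`:
`WTP_total = max_{1 ≤ i ≤ n} Σ_{j=1}^{i} min(b_j, (1+α)·b_i)`. -/
def WTPtotalM1 (n : ℕ) (b : ℕ → ℝ) (α : ℝ) : ℝ :=
  sSup {x : ℝ | ∃ i, 1 ≤ i ∧ i ≤ n ∧
    x = ∑ j ∈ Finset.Icc 1 i, min (b j) ((1 + α) * b i)}

/-!
Let `k₂` be the last position whose coalition of the first `k₂` members can cover the price when
each of them pays at most `(1 + α) b_{k₂}`. Lowering this cap continuously to `0` lowers the amount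
collected continuously to at most `0`, so some cap `P₁ ∈ (0, (1 + α) b_{k₂}]` collects exactly the
price. A later member `m` with `b_m ≥ P₁ / (1 + α)` would have a coalition that still covers the
price, against the choice of `k₂`; hence `k₂` is the cutoff for `P₁ / (1 + α)`.
-/

section CappedSum

variable {ι : Type*} {s t : Finset ι} {f : ι → ℝ} {c d T : ℝ}

/-- The amount collected when every `i ∈ s` contributes `f i`, capped at `c`. -/
def cappedSum (s : Finset ι) (f : ι → ℝ) (c : ℝ) : ℝ :=
  ∑ i ∈ s, min (f i) c

theorem continuous_cappedSum : Continuous (cappedSum s f) := by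
  unfold cappedSum
  fun_prop

theorem cappedSum_nonpos (hc : c ≤ 0) : cappedSum s f c ≤ 0 :=
  Finset.sum_nonpos fun _ _ => min_le_of_right_le hc

theorem cappedSum_le_cappedSum (hst : s ⊆ t) (hcd : c ≤ d) (hd : 0 ≤ d)
    (hf : ∀ i ∈ t, i ∉ s → 0 ≤ f i) : cappedSum s f c ≤ cappedSum t f d :=
  calc
    cappedSum s f c ≤ cappedSum s f d := Finset.sum_le_sum fun _ _ => min_le_min_left _ hcd
    _ ≤ cappedSum t f d :=
      Finset.sum_le_sum_of_subset_of_nonneg hst fun i hit his => le_min (hf i hit his) hd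

theorem exists_cappedSum_eq (hT : 0 < T) (hTc : T ≤ cappedSum s f c) :
    ∃ P ∈ Set.Ioc 0 c, cappedSum s f P = T := by
  have hc : 0 ≤ c := by
    by_contra! hc
    exact (hT.trans_le hTc).not_ge (cappedSum_nonpos hc.le)
  exact intermediate_value_Ioc hc continuous_cappedSum.continuousOn
    ⟨(cappedSum_nonpos le_rfl).trans_lt hT, hTc⟩

end CappedSum

section Cutoff

variable {β : Type*} [Preorder β] {n k l : ℕ} {b : ℕ → β} {u v : β}

/-- `k = max { i : b_i ≥ u }` for bids `b_1 ≥ ⋯ ≥ b_n`, with `k = 0` if no bid reaches `u`: the bids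
that reach the threshold `u` are exactly the first `k`. -/
def IsCutoff (n : ℕ) (b : ℕ → β) (u : β) (k : ℕ) : Prop :=
  k ≤ n ∧ ∀ i ∈ Set.Icc 1 n, u ≤ b i ↔ i ≤ k

theorem exists_isCutoff (hb : AntitoneOn b (Set.Icc 1 n)) (u : β) : ∃ k, IsCutoff n b u k := by
  let p : ℕ → Prop := fun i => u ≤ b i
  refine ⟨Nat.findGreatest p n, Nat.findGreatest_le n, fun i hi =>
    ⟨fun hui => Nat.le_findGreatest hi.2 hui, fun hik => ?_⟩⟩
  have hu : u ≤ b (Nat.findGreatest p n) :=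
    Nat.findGreatest_of_ne_zero (P := p) rfl (Nat.ne_of_gt (hi.1.trans hik))
  exact hu.trans (hb hi ⟨hi.1.trans hik, Nat.findGreatest_le n⟩ hik)

theorem IsCutoff.le_of_threshold_le (hk : IsCutoff n b u k) (hl : IsCutoff n b v l) (hvu : v ≤ u) :
    k ≤ l := by
  rcases k.eq_zero_or_pos with rfl | hpos
  · exact l.zero_le
  · have hmem : k ∈ Set.Icc 1 n := ⟨hpos, hk.1⟩
    exact (hl.2 k hmem).1 (hvu.trans ((hk.2 k hmem).2 le_rfl))

end Cutoff

section Mechanism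

variable {n m k k1 k2 : ℕ} {b : ℕ → ℝ} {α P T : ℝ}

theorem IsCutoff.cappedSum_eq (hk1 : IsCutoff n b P k1) (h12 : k1 ≤ k2) (h2n : k2 ≤ n) :
    cappedSum (Finset.Icc 1 k2) b P = k1 * P + ∑ i ∈ Finset.Icc (k1 + 1) k2, b i := by
  have hcapped : ∑ i ∈ Finset.Ioc 0 k1, min (b i) P = k1 * P := by
    rw [Finset.sum_congr rfl fun i hi => min_eq_right ?_, Finset.sum_const, Nat.card_Ioc,
      nsmul_eq_mul, Nat.sub_zero]
    have hi := Finset.mem_Ioc.1 hi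
    exact (hk1.2 i ⟨hi.1, hi.2.trans hk1.1⟩).2 hi.2
  have huncapped : ∑ i ∈ Finset.Ioc k1 k2, min (b i) P = ∑ i ∈ Finset.Ioc k1 k2, b i := by
    refine Finset.sum_congr rfl fun i hi => min_eq_left (le_of_not_ge fun hPi => ?_)
    have hi := Finset.mem_Ioc.1 hi
    exact hi.1.not_ge ((hk1.2 i ⟨by omega, hi.2.trans h2n⟩).1 hPi)
  calc
    cappedSum (Finset.Icc 1 k2) b P = ∑ i ∈ Finset.Ioc 0 k2, min (b i) P := by
      rw [cappedSum, ← Finset.Icc_add_one_left_eq_Ioc, zero_add]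
    _ = k1 * P + ∑ i ∈ Finset.Ioc k1 k2, b i := by
      rw [← Finset.sum_Ioc_consecutive _ k1.zero_le h12, hcapped, huncapped]
    _ = k1 * P + ∑ i ∈ Finset.Icc (k1 + 1) k2, b i := by
      rw [Finset.Icc_add_one_left_eq_Ioc]

theorem IsCutoff.feasible (hα : 0 ≤ α) (hP : 0 < P) (hk1 : IsCutoff n b P k1)
    (hk2 : IsCutoff n b (P / (1 + α)) k2) (hT : cappedSum (Finset.Icc 1 k2) b P = T) :
    Feasible n b α T P k1 k2 := by
  have h12 : k1 ≤ k2 := hk1.le_of_threshold_le hk2 (div_le_self hP.le (by linarith))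
  refine ⟨hP, h12, hk2.1, fun i h1 hi => ?_, fun i hi hin => ?_, fun i h1 hi => ?_,
    fun i hi hin => ?_, (hk1.cappedSum_eq h12 hk2.1).symm.trans hT⟩
  · exact (hk1.2 i ⟨h1, hi.trans hk1.1⟩).2 hi
  · exact lt_of_not_ge fun h => hi.not_ge ((hk1.2 i ⟨by omega, hin⟩).1 h)
  · exact (hk2.2 i ⟨h1, hi.trans hk2.1⟩).2 hi
  · exact lt_of_not_ge fun h => hi.not_ge ((hk2.2 i ⟨by omega, hin⟩).1 h)

theorem sum_pay_eq (h12 : k1 ≤ k2) (h2n : k2 ≤ n) :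
    ∑ i ∈ Finset.Icc 1 n, pay b P k1 k2 i = k1 * P + ∑ i ∈ Finset.Icc (k1 + 1) k2, b i := by
  have hfull : {i ∈ Finset.Icc 1 n | i ≤ k1} = Finset.Icc 1 k1 := by
    ext i
    simp only [Finset.mem_filter, Finset.mem_Icc]
    omega
  have hpartial : {i ∈ Finset.Icc 1 n | ¬i ≤ k1 ∧ i ≤ k2} = Finset.Icc (k1 + 1) k2 := by
    ext i
    simp only [Finset.mem_filter, Finset.mem_Icc]
    omega
  simp only [pay, Finset.sum_ite, Finset.filter_filter, hfull, hpartial, Finset.sum_const,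
    Nat.card_Icc, add_tsub_cancel_right, nsmul_eq_mul, smul_zero, add_zero]

theorem Feasible.sum_pay (h : Feasible n b α T P k1 k2) :
    ∑ i ∈ Finset.Icc 1 n, pay b P k1 k2 i = T := by
  obtain ⟨-, h12, h2n, -, -, -, -, hbudget⟩ := h
  exact (sum_pay_eq h12 h2n).trans hbudget

/-- The `k`-th term `Σ_{j=1}^{k} min(b_j, (1+α)·b_k)` of the maximum `WTPtotalM1`: what the first
`k` members can raise together. -/
def coalitionWTP (b : ℕ → ℝ) (α : ℝ) (k : ℕ) : ℝ :=
  cappedSum (Finset.Icc 1 k) b ((1 + α) * b k)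

theorem exists_coalitionWTP_eq_WTPtotalM1 (b : ℕ → ℝ) (α : ℝ) (hn : 1 ≤ n) :
    ∃ k ∈ Set.Icc 1 n, coalitionWTP b α k = WTPtotalM1 n b α := by
  have himage : WTPtotalM1 n b α = sSup (coalitionWTP b α '' Set.Icc 1 n) := by
    refine congrArg sSup (Set.ext fun x => ?_)
    simp only [coalitionWTP, cappedSum, Set.mem_ofPred_eq, Set.mem_image, Set.mem_Icc, and_assoc,
      eq_comm]
  rw [himage]
  exact ((Set.nonempty_Icc.2 hn).image _).csSup_mem ((Set.finite_Icc 1 n).image _)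

theorem exists_isGreatest_le_coalitionWTP (hn : 1 ≤ n) (hT : T ≤ WTPtotalM1 n b α) :
    ∃ k, IsGreatest {j ∈ Set.Icc 1 n | T ≤ coalitionWTP b α j} k := by
  obtain ⟨i, hi, hmax⟩ := exists_coalitionWTP_eq_WTPtotalM1 b α hn
  have hne : {j ∈ Set.Icc 1 n | T ≤ coalitionWTP b α j}.Nonempty := ⟨i, hi, hT.trans_eq hmax.symm⟩
  exact ((Set.finite_Icc 1 n).sep _).bddAbove.exists_isGreatest_of_nonempty hne

theorem cappedSum_le_coalitionWTP (hb : AntitoneOn b (Set.Icc 1 n)) (hα : 0 < 1 + α) (hP : 0 ≤ P)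
    (hm : m ∈ Set.Icc 1 n) (hkm : k ≤ m) (hPm : P / (1 + α) ≤ b m) :
    cappedSum (Finset.Icc 1 k) b P ≤ coalitionWTP b α m := by
  have hcap : P ≤ (1 + α) * b m := (div_le_iff₀' hα).1 hPm
  refine cappedSum_le_cappedSum (Finset.Icc_subset_Icc_right hkm) hcap (hP.trans hcap)
    fun j hj _ => ?_
  have hj := Finset.mem_Icc.1 hj
  calc
    0 ≤ P / (1 + α) := div_nonneg hP hα.le
    _ ≤ b m := hPm
    _ ≤ b j := hb ⟨hj.1, hj.2.trans hm.2⟩ hm hj.2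

theorem isCutoff_of_isGreatest (hb : AntitoneOn b (Set.Icc 1 n)) (hα : 0 < 1 + α) (hP : 0 ≤ P)
    (hk : IsGreatest {j ∈ Set.Icc 1 n | T ≤ coalitionWTP b α j} k) (hPk : P ≤ (1 + α) * b k)
    (hT : cappedSum (Finset.Icc 1 k) b P = T) : IsCutoff n b (P / (1 + α)) k := by
  obtain ⟨⟨hkmem, -⟩, hmax⟩ := hk
  refine ⟨hkmem.2, fun i hi => ⟨fun hPi => ?_, fun hik => ?_⟩⟩
  · rcases le_total i k with hik | hki
    · exact hik
    · exact hmax ⟨hi, hT.symm.trans_le (cappedSum_le_coalitionWTP hb hα hP hi hki hPi)⟩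
  · exact ((div_le_iff₀' hα).2 hPk).trans (hb hi hkmem hik)

end Mechanism

theorem stmt8_general (n : ℕ) (b : ℕ → ℝ) (α Ptotal : ℝ) (hn : 1 ≤ n) (hα : 0 ≤ α)
    (hb : AntitoneOn b (Set.Icc 1 n)) (hPt : 0 < Ptotal) (hle : Ptotal ≤ WTPtotalM1 n b α) :
    ∃ (P1 : ℝ) (k1 k2 : ℕ),
      Feasible n b α Ptotal P1 k1 k2 ∧ 1 ≤ k2 ∧
      ∑ i ∈ Finset.Icc 1 n, pay b P1 k1 k2 i = Ptotal := by
  obtain ⟨k2, hk2⟩ := exists_isGreatest_le_coalitionWTP hn hle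
  obtain ⟨hk2mem, hcovers⟩ := hk2.1
  obtain ⟨P1, ⟨hP1, hP1le⟩, hsum⟩ := exists_cappedSum_eq hPt hcovers
  have hcut2 : IsCutoff n b (P1 / (1 + α)) k2 :=
    isCutoff_of_isGreatest hb (by linarith) hP1.le hk2 hP1le hsum
  obtain ⟨k1, hcut1⟩ := exists_isCutoff hb P1
  have hfeasible : Feasible n b α Ptotal P1 k1 k2 := hcut1.feasible hα hP1 hcut2 hsum
  exact ⟨P1, k1, k2, hfeasible, hk2mem.1, hfeasible.sum_pay⟩

/-- existence of feasible parameters, budget balance of `M_1`: if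
`0 < P_total ≤ WTP_total`, there is a feasible parameter group `(P_1, P_2, k_1, k_2)`
with `k_2 ≥ 1`; consequently the payments of `M_1` sum exactly to `P_total`. -/
theorem stmt8 (n : ℕ) (b : ℕ → ℝ) (α Ptotal : ℝ)
    (hn : 1 ≤ n) (hα : 0 < α) (hb1 : 0 < b 1)
    (hmono : ∀ i j, 1 ≤ i → i ≤ j → j ≤ n → b j ≤ b i)
    (hnonneg : ∀ i, 1 ≤ i → i ≤ n → 0 ≤ b i)
    (hPt : 0 < Ptotal) (hle : Ptotal ≤ WTPtotalM1 n b α) :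
    ∃ (P1 : ℝ) (k1 k2 : ℕ),
      Feasible n b α Ptotal P1 k1 k2 ∧ 1 ≤ k2 ∧
      ∑ i ∈ Finset.Icc 1 n, pay b P1 k1 k2 i = Ptotal := by
  exact stmt8_general n b α Ptotal hn hα.le (fun i hi j hj hij => hmono i j hi.1 hij hj.2) hPt hle

end
end

section
/- For every integer a ≥ 1, let n = 2^a and let the DAO's member valuations be v_i = n/i for i = 1,…,n. Then the ungrouped (degenerate) total willingness to pay is max_{1≤i≤n} i·v_i = n, while the continuous grouping consisting of G^1 = {1} and G^j = {2^{j−2}+1, …, 2^{j−1}} for j = 2,…,a+1 has WTP(G^1) = n, WTP(G^j) = n/2 for j ≥ 2, and total willingness to pay WTP_total = n·(a+1)/2. In particular opt_WTP ≥ n·(a+1)/2, a logarithmic-factor improvement over the ungrouped willingness to pay. -/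
open scoped Classical

noncomputable section

/-! If `v i = c / i` on `{m + 1, …, k}`, then the member `i` of this block, whose rank is `i - m`,
supports the value `(i - m) * (c / i) = c * (1 - m / i)`, which increases with `i`; so the block is
worth `c * (1 - m / k)`. Hence `{1, …, n}` as a whole is worth no more than `{1}`, namely `c`, while
every doubling block `{m + 1, …, 2 * m}` is worth `c / 2`. Cutting at the powers of two yields one
subgroup worth `c` and logarithmically many worth `c / 2`. -/

open Finset

section WillingnessToPay

variable {v : ℕ → ℝ} {c : ℝ} {m k : ℕ}

theorem WTP_singleton (v : ℕ → ℝ) (i : ℕ) : WTP v {i} = v i := by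
  simp [WTP, filter_singleton]

theorem WTP_Ioc (v : ℕ → ℝ) (m k : ℕ) :
    WTP v (Ioc m k) = sSup ((fun i : ℕ => ((i : ℝ) - m) * v i) '' Set.Ioc m k) := by
  rw [WTP, coe_Ioc]
  refine congrArg sSup (Set.image_congr fun i hi => ?_)
  have initial_segment : {j ∈ Ioc m k | j ≤ i} = Ioc m i := by
    ext j
    simp only [mem_filter, mem_Ioc]
    grind
  rw [initial_segment, Nat.card_Ioc, Nat.cast_sub hi.1.le]

theorem WTP_Icc_one (v : ℕ → ℝ) (n : ℕ) :
    WTP v (Icc 1 n) = sSup {x : ℝ | ∃ i, 1 ≤ i ∧ i ≤ n ∧ x = (i : ℝ) * v i} := by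
  rw [show Icc 1 n = Ioc 0 n from rfl, WTP_Ioc]
  congr 1
  ext x
  simp [Nat.succ_le_iff, and_assoc, eq_comm]

theorem WTP_Ioc_of_eq_div (hc : 0 ≤ c) (hmk : m < k) (hv : ∀ i ∈ Ioc m k, v i = c / i) :
    WTP v (Ioc m k) = c * (1 - m / k) := by
  have value : ∀ i ∈ Set.Ioc m k, ((i : ℝ) - m) * v i = c * (1 - m / i) := by
    intro i hi
    have hi₀ : (i : ℝ) ≠ 0 := by exact_mod_cast (Nat.zero_lt_of_lt hi.1).ne'
    rw [hv i (mem_Ioc.2 hi)]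
    field_simp
  rw [WTP_Ioc, Set.image_congr value]
  refine IsGreatest.csSup_eq ⟨⟨k, ⟨hmk, le_rfl⟩, rfl⟩, ?_⟩
  rintro _ ⟨i, ⟨hmi, hik⟩, rfl⟩
  have hi₀ : (0 : ℝ) < i := by exact_mod_cast Nat.zero_lt_of_lt hmi
  dsimp only
  gcongr

theorem WTP_Icc_one_of_eq_div {n : ℕ} (hn : 0 < n) (hc : 0 ≤ c)
    (hv : ∀ i, 1 ≤ i → i ≤ n → v i = c / i) : WTP v (Icc 1 n) = c := by
  have hIoc : WTP v (Ioc 0 n) = c * (1 - (0 : ℕ) / n) :=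
    WTP_Ioc_of_eq_div hc hn fun i hi => hv i (mem_Ioc.1 hi).1 (mem_Ioc.1 hi).2
  rwa [Nat.cast_zero, zero_div, sub_zero, mul_one] at hIoc

theorem WTP_Ioc_two_mul (hc : 0 ≤ c) (hm : 0 < m) (hv : ∀ i ∈ Ioc m (2 * m), v i = c / i) :
    WTP v (Ioc m (2 * m)) = c / 2 := by
  rw [WTP_Ioc_of_eq_div hc (by omega) hv]
  push_cast
  field_simp
  norm_num

-- `G₀` has rank `1` among the subgroups, while each of the others, being tied, has rank `#𝒢`.
theorem WTPtotal_eq_max {𝒢 : Finset (Finset ℕ)} {G₀ : Finset ℕ} {x : ℝ} (hG₀ : G₀ ∈ 𝒢)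
    (h𝒢 : 𝒢.Nontrivial) (hlt : x < WTP v G₀) (hx : ∀ G ∈ 𝒢, G ≠ G₀ → WTP v G = x) :
    WTPtotal v 𝒢 = max (WTP v G₀) (#𝒢 * x) := by
  have x_le : ∀ G ∈ 𝒢, x ≤ WTP v G := by
    intro G hG
    obtain rfl | hne := eq_or_ne G G₀
    exacts [hlt.le, (hx G hG hne).ge]
  have top_rank : {G ∈ 𝒢 | WTP v G₀ ≤ WTP v G} = {G₀} := by
    ext G
    rw [mem_filter, mem_singleton]
    refine ⟨fun ⟨hG, hle⟩ => ?_, ?_⟩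
    · by_contra hne
      exact (hx G hG hne ▸ hle).not_gt hlt
    · rintro rfl
      exact ⟨hG₀, le_rfl⟩
  have top_value : (#{G ∈ 𝒢 | WTP v G₀ ≤ WTP v G} : ℝ) * WTP v G₀ = WTP v G₀ := by
    rw [top_rank, card_singleton, Nat.cast_one, one_mul]
  have other_value : ∀ G ∈ 𝒢, G ≠ G₀ → (#{H ∈ 𝒢 | WTP v G ≤ WTP v H} : ℝ) * WTP v G = #𝒢 * x := by
    intro G hG hne
    rw [hx G hG hne, filter_true_of_mem x_le]
  obtain ⟨G₁, hG₁, hne₁⟩ := h𝒢.exists_ne G₀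
  rw [WTPtotal, ← csSup_pair]
  congr 1
  apply Set.Subset.antisymm
  · rintro _ ⟨G, hG, rfl⟩
    obtain rfl | hne := eq_or_ne G G₀
    exacts [.inl top_value, .inr (other_value G hG hne)]
  · rintro _ (rfl | rfl)
    exacts [⟨G₀, hG₀, top_value⟩, ⟨G₁, hG₁, other_value G₁ hG₁ hne₁⟩]

end WillingnessToPay

section CutGrouping

variable {t : ℕ → ℕ}

/-- The block `{t i + 1, …, t (i + 1)}` of members between two successive cut points of `t`. -/
def cutBlock (t : ℕ → ℕ) (i : ℕ) : Finset ℕ :=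
  Ioc (t i) (t (i + 1))

/-- The grouping of the members `{t 0 + 1, …, t k}` into the `k` blocks of consecutive members
delimited by the cut points `t 0, …, t k`. -/
def cutGrouping (t : ℕ → ℕ) (k : ℕ) : Finset (Finset ℕ) :=
  (range k).image (cutBlock t)

theorem cutBlock_mem_cutGrouping {i k : ℕ} (hi : i < k) : cutBlock t i ∈ cutGrouping t k :=
  mem_image_of_mem _ (mem_range.2 hi)

theorem cutBlock_nonempty (ht : StrictMono t) (i : ℕ) : (cutBlock t i).Nonempty :=
  nonempty_Ioc.2 (ht i.lt_succ_self)

theorem pairwise_disjoint_cutBlock (ht : Monotone t) :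
    Pairwise (Function.onFun Disjoint (cutBlock t)) := by
  intro i j hij
  rw [Function.onFun, ← disjoint_coe, cutBlock, cutBlock, coe_Ioc, coe_Ioc]
  exact ht.pairwise_disjoint_on_Ioc_succ hij

theorem cutBlock_injective (ht : StrictMono t) : Function.Injective (cutBlock t) := by
  intro i j hij
  by_contra hne
  have hdisj : Disjoint (cutBlock t i) (cutBlock t j) :=
    pairwise_disjoint_cutBlock ht.monotone hne
  rw [hij, disjoint_self] at hdisj
  exact (cutBlock_nonempty ht j).ne_empty hdisj

theorem card_cutGrouping (ht : StrictMono t) (k : ℕ) : #(cutGrouping t k) = k := by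
  rw [cutGrouping, card_image_of_injective _ (cutBlock_injective ht), card_range]

theorem sup_cutGrouping (ht : Monotone t) (k : ℕ) :
    (cutGrouping t k).sup id = Ioc (t 0) (t k) := by
  rw [cutGrouping, sup_image, Function.id_comp, sup_eq_biUnion, ← coe_inj, coe_biUnion, coe_range,
    coe_Ioc, ← ht.biUnion_Ico_Ioc_map_succ 0 k]
  simp [cutBlock]

theorem isGrouping_cutGrouping (ht : StrictMono t) (ht₀ : t 0 = 0) (k : ℕ) :
    IsGrouping (t k) (cutGrouping t k) := by
  refine ⟨?_, ?_, ?_⟩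
  · exact forall_mem_image.2 fun i _ => cutBlock_nonempty ht i
  · rw [cutGrouping, coe_image]
    exact ((pairwise_disjoint_cutBlock ht.monotone).set_pairwise _).image
  · rw [sup_cutGrouping ht.monotone, ht₀]
    rfl

theorem continuousGrouping_cutGrouping (t : ℕ → ℕ) (k : ℕ) :
    ContinuousGrouping (cutGrouping t k) := by
  refine forall_mem_image.2 fun i _ x hx z hz y hxy hyz => ?_
  rw [cutBlock, mem_Ioc] at hx hz ⊢
  exact ⟨hx.1.trans_le hxy, hyz.trans hz.2⟩

end CutGrouping

section Dyadic

variable {v : ℕ → ℝ} {c : ℝ} {a : ℕ}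

/-- The cut points `0, 1, 2, 4, 8, …`, whose blocks are `{1}` and the dyadic blocks
`{2 ^ k + 1, …, 2 ^ (k + 1)}`. The subgroup `G^j`, counted from `j = 1`, is the block of index
`j - 1`, counted from `0`. -/
def dyadicCut : ℕ → ℕ
  | 0 => 0
  | k + 1 => 2 ^ k

theorem dyadicCut_strictMono : StrictMono dyadicCut := by
  refine strictMono_nat_of_lt_succ ?_
  rintro (_ | k)
  exacts [one_pos, Nat.pow_lt_pow_succ one_lt_two]

theorem cutBlock_dyadicCut_zero : cutBlock dyadicCut 0 = {1} :=
  rfl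

theorem cutBlock_dyadicCut_sub_one {j : ℕ} (hj : 2 ≤ j) :
    cutBlock dyadicCut (j - 1) = Icc (2 ^ (j - 2) + 1) (2 ^ (j - 1)) := by
  obtain ⟨k, rfl⟩ := Nat.exists_eq_add_of_le' hj
  exact (Icc_add_one_left_eq_Ioc (2 ^ k) (2 ^ (k + 1))).symm

theorem cutGrouping_dyadicCut_succ (a : ℕ) :
    cutGrouping dyadicCut (a + 1) =
      {Icc 1 1} ∪ (Icc 2 (a + 1)).image (fun j => Icc (2 ^ (j - 2) + 1) (2 ^ (j - 1))) := by
  have range_eq : range (a + 1) = {0} ∪ (Icc 2 (a + 1)).image (· - 1) := by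
    ext i
    simp only [mem_range, mem_union, mem_singleton, mem_image, mem_Icc]
    refine ⟨fun hi => i.eq_zero_or_pos.imp_right fun hi₀ => ⟨i + 1, ?_⟩, ?_⟩ <;> grind
  rw [cutGrouping, range_eq, image_union, image_singleton, image_image]
  exact congrArg _ (image_congr fun j hj => cutBlock_dyadicCut_sub_one (mem_Icc.1 hj).1)

theorem WTP_cutBlock_dyadicCut_succ {k : ℕ} (hk : k < a) (hc : 0 ≤ c)
    (hv : ∀ i, 1 ≤ i → i ≤ 2 ^ a → v i = c / i) : WTP v (cutBlock dyadicCut (k + 1)) = c / 2 := by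
  rw [cutBlock, dyadicCut, dyadicCut, pow_succ']
  refine WTP_Ioc_two_mul hc (Nat.two_pow_pos k) fun i hi => ?_
  obtain ⟨hki, hik⟩ := mem_Ioc.1 hi
  rw [← pow_succ'] at hik
  exact hv i (Nat.one_le_of_lt hki) (hik.trans (Nat.pow_le_pow_right two_pos hk))

theorem WTPtotal_cutGrouping_dyadicCut_succ (ha : 1 ≤ a) (hc : 0 < c)
    (hv : ∀ i, 1 ≤ i → i ≤ 2 ^ a → v i = c / i) :
    WTPtotal v (cutGrouping dyadicCut (a + 1)) = c * (a + 1) / 2 := by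
  have ha' : (1 : ℝ) ≤ a := by exact_mod_cast ha
  have hcard : #(cutGrouping dyadicCut (a + 1)) = a + 1 := card_cutGrouping dyadicCut_strictMono _
  have hnontrivial : (cutGrouping dyadicCut (a + 1)).Nontrivial :=
    one_lt_card_iff_nontrivial.1 (by omega)
  have hfirst : WTP v (cutBlock dyadicCut 0) = c := by
    rw [cutBlock_dyadicCut_zero, WTP_singleton, hv 1 le_rfl Nat.one_le_two_pow, Nat.cast_one,
      div_one]
  have hothers : ∀ G ∈ cutGrouping dyadicCut (a + 1), G ≠ cutBlock dyadicCut 0 →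
      WTP v G = c / 2 := by
    refine forall_mem_image.2 ?_
    rintro (_ | k) hk hne
    · exact absurd rfl hne
    · exact WTP_cutBlock_dyadicCut_succ (Nat.succ_lt_succ_iff.1 (mem_range.1 hk)) hc.le hv
  have hfirst_lt : c / 2 < WTP v (cutBlock dyadicCut 0) := by
    rw [hfirst]
    exact half_lt_self hc
  calc WTPtotal v (cutGrouping dyadicCut (a + 1))
      = max c ((a + 1 : ℕ) * (c / 2)) := by
        rw [WTPtotal_eq_max (cutBlock_mem_cutGrouping a.succ_pos) hnontrivial hfirst_lt hothers,
          hfirst, hcard]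
    _ = (a + 1 : ℕ) * (c / 2) := by
        refine max_eq_right ?_
        push_cast
        linarith [le_mul_of_one_le_left hc.le ha']
    _ = c * (a + 1) / 2 := by
        push_cast
        ring

end Dyadic

/-- the example of Fig. 2: for `n = 2^a` with `a ≥ 1` and valuations
`v_i = n/i`, the ungrouped total willingness to pay `max_{1≤i≤n} i·v_i` equals `n`,
while the continuous grouping `G^1 = {1}`, `G^j = {2^{j-2}+1, …, 2^{j-1}}` for
`j = 2,…,a+1` has `WTP(G^1) = n`, `WTP(G^j) = n/2` for `j ≥ 2`, and total willingness
to pay `n·(a+1)/2`.  In particular `opt_WTP ≥ n·(a+1)/2`. -/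
theorem stmt12 (a : ℕ) (ha : 1 ≤ a) (n : ℕ) (hn : n = 2 ^ a) (v : ℕ → ℝ)
    (hv : ∀ i, 1 ≤ i → i ≤ n → v i = (n : ℝ) / (i : ℝ)) :
    sSup {x : ℝ | ∃ i, 1 ≤ i ∧ i ≤ n ∧ x = (i : ℝ) * v i} = (n : ℝ) ∧
    ∃ 𝒢 : Finset (Finset ℕ),
      𝒢 = {Finset.Icc 1 1} ∪
            (Finset.Icc 2 (a + 1)).image
              (fun j => Finset.Icc (2 ^ (j - 2) + 1) (2 ^ (j - 1))) ∧
      IsGrouping n 𝒢 ∧ ContinuousGrouping 𝒢 ∧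
      WTP v (Finset.Icc 1 1) = (n : ℝ) ∧
      (∀ j, 2 ≤ j → j ≤ a + 1 →
        WTP v (Finset.Icc (2 ^ (j - 2) + 1) (2 ^ (j - 1))) = (n : ℝ) / 2) ∧
      WTPtotal v 𝒢 = (n : ℝ) * (a + 1) / 2 ∧
      (∀ W : ℝ,
        IsGreatest {W' : ℝ | ∃ 𝒢' : Finset (Finset ℕ), IsGrouping n 𝒢' ∧ WTPtotal v 𝒢' = W'} W →
        (n : ℝ) * (a + 1) / 2 ≤ W) := by
  subst hn
  have hn₀ : (0 : ℝ) < (2 ^ a : ℕ) := by exact_mod_cast Nat.two_pow_pos a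
  have hgroup : IsGrouping (2 ^ a) (cutGrouping dyadicCut (a + 1)) :=
    isGrouping_cutGrouping dyadicCut_strictMono rfl (a + 1)
  have htotal := WTPtotal_cutGrouping_dyadicCut_succ ha hn₀ hv
  refine ⟨?_, cutGrouping dyadicCut (a + 1), cutGrouping_dyadicCut_succ a, hgroup,
    continuousGrouping_cutGrouping _ _, ?_, ?_, htotal, fun W hW => hW.2 ⟨_, hgroup, htotal⟩⟩
  · rw [← WTP_Icc_one, WTP_Icc_one_of_eq_div (Nat.two_pow_pos a) hn₀.le hv]
  · rw [Icc_self, WTP_singleton, hv 1 le_rfl Nat.one_le_two_pow, Nat.cast_one, div_one]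
  · intro j hj hja
    rw [← cutBlock_dyadicCut_sub_one hj]
    obtain ⟨k, rfl⟩ := Nat.exists_eq_add_of_le' hj
    exact WTP_cutBlock_dyadicCut_succ (by omega) hn₀.le hv

end
end

section
/- Fix α > 0, true values v_1,…,v_n > 0 of the DAO's members, a highest competing bid P > 0, and the other members' bids b_{−i}. Consider mechanism M_1 in rank-free form, where in each winning scenario a minimal feasible P_1 exists and is selected. Suppose both the truthful profile (v_i, b_{−i}) and an underbidding profile (b_i', b_{−i}) with 0 < b_i' < v_i are generic, i.e. WTP_total ≠ P under each profile. Then member i's collective utility under truthful bidding is at least its collective utility under underbidding: u_i(v_i, b_{−i}) ≥ u_i(b_i', b_{−i}). -/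
open scoped Classical

noncomputable section

/-- The aggregation function of mechanism `M_1` in rank-free form: for a bid profile
`b` and collectivism parameter `α`, `WTP_total(b)` is the max over thresholds
`t ∈ {b_1, …, b_n}` of `Σ_{j : b_j ≥ t} min(b_j, (1+α)·t)`. -/
def wtpTotalRF (n : ℕ) (α : ℝ) (b : Fin n → ℝ) : ℝ :=
  sSup {x : ℝ | ∃ t : Fin n,
    x = ∑ j ∈ Finset.univ.filter (fun j => b t ≤ b j), min (b j) ((1 + α) * b t)}

/-- `P_1 > 0` is feasible for profile `b` at price `P` if
`Σ_{i : b_i ≥ P_1/(1+α)} min(b_i, P_1) = P`. -/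
def FeasibleP1 (n : ℕ) (α P : ℝ) (b : Fin n → ℝ) (P1 : ℝ) : Prop :=
  0 < P1 ∧
  ∑ j ∈ Finset.univ.filter (fun j => P1 / (1 + α) ≤ b j), min (b j) P1 = P

/-- The access of member `j` in the rank-free `M_1` when the DAO wins with selected
price `P_1`: `min(1, b_j/P_1)` if `b_j ≥ P_1/(1+α)`, otherwise `0`. -/
def xRF (n : ℕ) (α : ℝ) (b : Fin n → ℝ) (P1 : ℝ) (j : Fin n) : ℝ :=
  if P1 / (1 + α) ≤ b j then min 1 (b j / P1) else 0

/-- The payment of member `j` in the rank-free `M_1` when the DAO wins with selected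
price `P_1`: `min(b_j, P_1)` if `b_j ≥ P_1/(1+α)`, otherwise `0`. -/
def pRF (n : ℕ) (α : ℝ) (b : Fin n → ℝ) (P1 : ℝ) (j : Fin n) : ℝ :=
  if P1 / (1 + α) ≤ b j then min (b j) P1 else 0

/-- The access of member `j` in the rank-free `M_1` at highest competing bid `P`:
if the DAO wins (`WTP_total(b) ≥ P`) this is `xRF` with the selected `P_1`,
otherwise `0`. -/
def outX (n : ℕ) (α : ℝ) (b : Fin n → ℝ) (P P1 : ℝ) (j : Fin n) : ℝ :=
  if P ≤ wtpTotalRF n α b then xRF n α b P1 j else 0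

/-- The payment of member `j` in the rank-free `M_1` at highest competing bid `P`:
if the DAO wins (`WTP_total(b) ≥ P`) this is `pRF` with the selected `P_1`,
otherwise `0`. -/
def outP (n : ℕ) (α : ℝ) (b : Fin n → ℝ) (P P1 : ℝ) (j : Fin n) : ℝ :=
  if P ≤ wtpTotalRF n α b then pRF n α b P1 j else 0

/-- The collective utility (extended-real valued) of member `i` with true values `v`,
accesses `x` and payments `p`: `v_i·x_i − p_i + α·Σ_j v_j·x_j` if `x_i > 0` and
`p_i ≤ v_i`; `−∞` if `p_i > v_i`; and `−p_i` if `x_i = 0`. -/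
def utilRF (n : ℕ) (α : ℝ) (v : Fin n → ℝ) (x p : Fin n → ℝ) (i : Fin n) : EReal :=
  if v i < p i then ⊥
  else if 0 < x i then ((v i * x i - p i + α * ∑ j, v j * x j : ℝ) : EReal)
  else ((-(p i) : ℝ) : EReal)

/-!
A member with access `x_i` pays `q · x_i` at the selected price `q`, so a member that does not
overbid has utility `x_i ((1 + α) v_i - q) + α ∑_{j ≠ i} v_j x_j` if `x_i > 0`, and then
`q ≤ (1 + α) v_i`; otherwise it has utility `0`. Access is monotone in the bids and antitone in the
price, hence higher bids together with a lower price can only help, and it remains to see that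
raising bids lowers the selected price. Raising bids raises the revenue at every price, and if the
revenue at some price is at least `P`, then some price no higher raises exactly `P`: as the price
falls to `0`, revenue falls continuously to `0` except for upward jumps where new payers join.
-/

section Revenue

variable {ι : Type*} [Fintype ι] {α P q r : ℝ} {b c : ι → ℝ}

/-- The members charged at price `q`: those bidding at least `q / (1 + α)`. -/
def payers (α : ℝ) (b : ι → ℝ) (q : ℝ) : Finset ι :=
  Finset.univ.filter fun j => q / (1 + α) ≤ b j

/-- The total payment collected at price `q`, so that a price is feasible when its revenue
is `P`. -/
def revenue (α : ℝ) (b : ι → ℝ) (q : ℝ) : ℝ :=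
  ∑ j ∈ payers α b q, min (b j) q

theorem mem_payers {j : ι} : j ∈ payers α b q ↔ q / (1 + α) ≤ b j := by
  simp only [payers, Finset.mem_filter, Finset.mem_univ, true_and]

theorem payers_subset_payers (hα : 0 ≤ α) (hbc : b ≤ c) (hrq : r ≤ q) :
    payers α b q ⊆ payers α c r := fun j hj => by
  rw [mem_payers] at hj ⊢
  calc r / (1 + α) ≤ q / (1 + α) := by gcongr
    _ ≤ b j := hj
    _ ≤ c j := hbc j

theorem sum_min_le_revenue {s : Finset ι} (hb : 0 ≤ b) (hq : 0 ≤ q) (hs : s ⊆ payers α b q) :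
    ∑ j ∈ s, min (b j) q ≤ revenue α b q :=
  Finset.sum_le_sum_of_subset_of_nonneg hs fun j _ _ => le_min (hb j) hq

theorem revenue_mono (hα : 0 ≤ α) (hc : 0 ≤ c) (hbc : b ≤ c) (hq : 0 ≤ q) :
    revenue α b q ≤ revenue α c q :=
  calc revenue α b q ≤ ∑ j ∈ payers α b q, min (c j) q :=
        Finset.sum_le_sum fun j _ => min_le_min_right q (hbc j)
    _ ≤ revenue α c q :=
        sum_min_le_revenue hc hq (payers_subset_payers hα hbc le_rfl)

theorem exists_revenue_eq_of_le_revenue (hα : 0 ≤ α) (hP : 0 < P) (hb : 0 ≤ b) (hq : 0 < q)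
    (h : P ≤ revenue α b q) : ∃ r, 0 < r ∧ r ≤ q ∧ revenue α b r = P := by
  -- Among the prices raising at least `P`, take one whose set of payers is maximal: lowering it
  -- until these payers contribute exactly `P` can then recruit no one else.
  obtain ⟨s, ⟨hs, hsq, hPs⟩, hmax⟩ := Set.Finite.exists_maximalFor' (payers α b)
    {s | 0 < s ∧ s ≤ q ∧ P ≤ revenue α b s} (Set.toFinite _) ⟨q, hq, le_rfl, h⟩
  have hcont : Continuous fun r => ∑ j ∈ payers α b s, min (b j) r := by fun_prop
  have hzero : ∑ j ∈ payers α b s, min (b j) 0 = 0 :=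
    Finset.sum_eq_zero fun j _ => min_eq_right (hb j)
  obtain ⟨r, ⟨hr, hrs⟩, hrP⟩ :=
    intermediate_value_Ioc hs.le hcont.continuousOn ⟨hzero.trans_lt hP, hPs⟩
  have hsub : payers α b s ⊆ payers α b r := payers_subset_payers hα le_rfl hrs
  have hPr : P ≤ revenue α b r := hrP.ge.trans (sum_min_le_revenue hb hr.le hsub)
  have hpayers : payers α b r = payers α b s :=
    (hmax ⟨hr, hrs.trans hsq, hPr⟩ hsub).antisymm hsub
  exact ⟨r, hr, hrs.trans hsq, by rw [revenue, hpayers]; exact hrP⟩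

end Revenue

section Mechanism

variable {n : ℕ} {α P q r : ℝ} {v b c : Fin n → ℝ} {i : Fin n}

theorem wtpTotalRF_eq_iSup_revenue (hα : 0 ≤ α) :
    wtpTotalRF n α b = ⨆ t : Fin n, revenue α b ((1 + α) * b t) := by
  have hα' : 1 + α ≠ 0 := by positivity
  simp only [wtpTotalRF, iSup, Set.range, revenue, payers, mul_div_cancel_left₀ _ hα', eq_comm]

theorem revenue_le_wtpTotalRF (hα : 0 ≤ α) (h : 0 < revenue α b q) :
    revenue α b q ≤ wtpTotalRF n α b := by
  have hα' : 0 < 1 + α := by linarith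
  have hne : (payers α b q).Nonempty := Finset.nonempty_of_sum_ne_zero h.ne'
  obtain ⟨t, ht, hmin⟩ := Finset.exists_min_image _ b hne
  have hqt : q ≤ (1 + α) * b t := (div_le_iff₀' hα').mp (mem_payers.mp ht)
  -- Raising the price to `1 + α` times the lowest bid among the payers loses none of them.
  have hpayers : payers α b ((1 + α) * b t) = payers α b q := by
    refine (payers_subset_payers hα le_rfl hqt).antisymm fun j hj => ?_
    rw [mem_payers, mul_div_cancel_left₀ _ hα'.ne']
    exact hmin j hj
  calc revenue α b q ≤ revenue α b ((1 + α) * b t) := by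
        rw [revenue, revenue, hpayers]
        exact Finset.sum_le_sum fun j _ => min_le_min_left _ hqt
    _ ≤ wtpTotalRF n α b := by
        rw [wtpTotalRF_eq_iSup_revenue hα]
        exact le_ciSup (Set.finite_range fun t => revenue α b ((1 + α) * b t)).bddAbove t

theorem xRF_nonneg (hb : 0 ≤ b) (hq : 0 ≤ q) (j : Fin n) : 0 ≤ xRF n α b q j := by
  unfold xRF
  split_ifs
  exacts [le_min zero_le_one (div_nonneg (hb j) hq), le_rfl]

theorem xRF_le_xRF (hα : 0 ≤ α) (hc : 0 ≤ c) (hbc : b ≤ c) (hr : 0 < r) (hrq : r ≤ q)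
    (j : Fin n) : xRF n α b q j ≤ xRF n α c r j := by
  by_cases hj : j ∈ payers α b q
  · have hj' : j ∈ payers α c r := payers_subset_payers hα hbc hrq hj
    rw [xRF, xRF, if_pos (mem_payers.mp hj), if_pos (mem_payers.mp hj')]
    exact min_le_min_left 1 (div_le_div₀ (hc j) (hbc j) hr hrq)
  · rw [xRF, if_neg (mem_payers.not.mp hj)]
    exact xRF_nonneg hc hr.le j

theorem le_one_add_mul_of_xRF_pos (hα : 0 ≤ α) {j : Fin n} (hx : 0 < xRF n α b q j) :
    q ≤ (1 + α) * b j := by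
  unfold xRF at hx
  split_ifs at hx with hj
  · exact (div_le_iff₀' (by linarith)).mp hj
  · exact absurd hx (lt_irrefl 0)

theorem pRF_eq_mul_xRF (hq : 0 < q) (j : Fin n) : pRF n α b q j = q * xRF n α b q j := by
  unfold pRF xRF
  split_ifs
  · rw [mul_min_of_nonneg _ _ hq.le, mul_one, mul_div_cancel₀ _ hq.ne', min_comm]
  · rw [mul_zero]

theorem pRF_le_bid (hb : 0 ≤ b) (j : Fin n) : pRF n α b q j ≤ b j := by
  unfold pRF
  split_ifs
  exacts [min_le_left _ _, hb j]

theorem utilRF_of_eq_zero {x p : Fin n → ℝ} (hv : 0 ≤ v i) (hx : x i = 0) (hp : p i = 0) :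
    utilRF n α v x p i = 0 := by
  simp [utilRF, hx, hp, hv]

theorem utilRF_xRF_pRF_of_eq_zero (hv : 0 ≤ v i) (hq : 0 < q) (hx : xRF n α b q i = 0) :
    utilRF n α v (xRF n α b q) (pRF n α b q) i = 0 :=
  utilRF_of_eq_zero hv hx (by rw [pRF_eq_mul_xRF hq, hx, mul_zero])

theorem utilRF_xRF_pRF_of_pos (hb : 0 ≤ b) (hbv : b i ≤ v i) (hq : 0 < q)
    (hx : 0 < xRF n α b q i) :
    utilRF n α v (xRF n α b q) (pRF n α b q) i =
      ((xRF n α b q i * ((1 + α) * v i - q) +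
        α * ∑ j ∈ Finset.univ.erase i, v j * xRF n α b q j : ℝ) : EReal) := by
  rw [utilRF, if_neg ((pRF_le_bid hb i).trans hbv).not_gt, if_pos hx, pRF_eq_mul_xRF hq,
    ← Finset.add_sum_erase _ _ (Finset.mem_univ i)]
  congr 1
  ring

theorem utilRF_xRF_pRF_nonneg (hα : 0 ≤ α) (hv : 0 ≤ v) (hb : 0 ≤ b) (hbv : b i ≤ v i)
    (hq : 0 < q) : 0 ≤ utilRF n α v (xRF n α b q) (pRF n α b q) i := by
  rcases (xRF_nonneg (α := α) hb hq.le i).eq_or_lt with hx | hx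
  · exact (utilRF_xRF_pRF_of_eq_zero (hv i) hq hx.symm).ge
  · have hqv : q ≤ (1 + α) * v i := (le_one_add_mul_of_xRF_pos hα hx).trans (by gcongr)
    have hothers : 0 ≤ ∑ j ∈ Finset.univ.erase i, v j * xRF n α b q j :=
      Finset.sum_nonneg fun j _ => mul_nonneg (hv j) (xRF_nonneg hb hq.le j)
    rw [utilRF_xRF_pRF_of_pos hb hbv hq hx]
    exact_mod_cast add_nonneg (mul_nonneg hx.le (sub_nonneg.mpr hqv)) (mul_nonneg hα hothers)

theorem utilRF_xRF_pRF_mono (hα : 0 ≤ α) (hv : 0 ≤ v) (hb : 0 ≤ b) (hbc : b ≤ c) (hcv : c i ≤ v i)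
    (hr : 0 < r) (hrq : r ≤ q) :
    utilRF n α v (xRF n α b q) (pRF n α b q) i ≤ utilRF n α v (xRF n α c r) (pRF n α c r) i := by
  have hq : 0 < q := hr.trans_le hrq
  have hc : 0 ≤ c := hb.trans hbc
  have hbv : b i ≤ v i := (hbc i).trans hcv
  have haccess : ∀ j, xRF n α b q j ≤ xRF n α c r j := xRF_le_xRF hα hc hbc hr hrq
  rcases (xRF_nonneg (α := α) hb hq.le i).eq_or_lt with hx | hx
  · rw [utilRF_xRF_pRF_of_eq_zero (hv i) hq hx.symm]
    exact utilRF_xRF_pRF_nonneg hα hv hc hcv hr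
  · have hqv : q ≤ (1 + α) * v i := (le_one_add_mul_of_xRF_pos hα hx).trans (by gcongr)
    have hown : xRF n α b q i * ((1 + α) * v i - q) ≤ xRF n α c r i * ((1 + α) * v i - r) :=
      mul_le_mul (haccess i) (by gcongr) (sub_nonneg.mpr hqv) (hx.le.trans (haccess i))
    have hothers : ∑ j ∈ Finset.univ.erase i, v j * xRF n α b q j ≤
        ∑ j ∈ Finset.univ.erase i, v j * xRF n α c r j :=
      Finset.sum_le_sum fun j _ => mul_le_mul_of_nonneg_left (haccess j) (hv j)
    rw [utilRF_xRF_pRF_of_pos hb hbv hq hx,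
      utilRF_xRF_pRF_of_pos hc hcv hr (hx.trans_le (haccess i))]
    exact_mod_cast add_le_add hown (mul_le_mul_of_nonneg_left hothers hα)

theorem utilRF_outX_outP_of_le (hwin : P ≤ wtpTotalRF n α b) :
    utilRF n α v (outX n α b P q) (outP n α b P q) i =
      utilRF n α v (xRF n α b q) (pRF n α b q) i := by
  have hX : outX n α b P q = xRF n α b q := funext fun _ => if_pos hwin
  have hP : outP n α b P q = pRF n α b q := funext fun _ => if_pos hwin
  rw [hX, hP]

theorem utilRF_outX_outP_of_not_le (hv : 0 ≤ v i) (hlose : ¬ P ≤ wtpTotalRF n α b) :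
    utilRF n α v (outX n α b P q) (outP n α b P q) i = 0 :=
  utilRF_of_eq_zero hv (if_neg hlose) (if_neg hlose)

end Mechanism

theorem stmt14_general {n : ℕ} {α P : ℝ} (hα : 0 ≤ α) (hP : 0 < P) {v : Fin n → ℝ} (hv : 0 ≤ v)
    {i : Fin n} {b c : Fin n → ℝ} (hb : 0 ≤ b) (hbc : b ≤ c) (hcv : c i ≤ v i) {q r : ℝ}
    (hq : P ≤ wtpTotalRF n α b → FeasibleP1 n α P b q)
    (hr : P ≤ wtpTotalRF n α c → IsLeast {s : ℝ | FeasibleP1 n α P c s} r) :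
    utilRF n α v (outX n α b P q) (outP n α b P q) i ≤
      utilRF n α v (outX n α c P r) (outP n α c P r) i := by
  have hc : 0 ≤ c := hb.trans hbc
  by_cases hwinb : P ≤ wtpTotalRF n α b
  · obtain ⟨hqpos, hrevb⟩ := hq hwinb
    have hrevc : P ≤ revenue α c q := hrevb.ge.trans (revenue_mono hα hc hbc hqpos.le)
    have hwinc : P ≤ wtpTotalRF n α c :=
      hrevc.trans (revenue_le_wtpTotalRF hα (hP.trans_le hrevc))
    obtain ⟨s, hspos, hsq, hs⟩ := exists_revenue_eq_of_le_revenue hα hP hc hqpos hrevc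
    have hrq : r ≤ q := ((hr hwinc).2 ⟨hspos, hs⟩).trans hsq
    rw [utilRF_outX_outP_of_le hwinb, utilRF_outX_outP_of_le hwinc]
    exact utilRF_xRF_pRF_mono hα hv hb hbc hcv (hr hwinc).1.1 hrq
  · rw [utilRF_outX_outP_of_not_le (hv i) hwinb]
    by_cases hwinc : P ≤ wtpTotalRF n α c
    · rw [utilRF_outX_outP_of_le hwinc]
      exact utilRF_xRF_pRF_nonneg hα hv hc hcv (hr hwinc).1.1
    · exact (utilRF_outX_outP_of_not_le (hv i) hwinc).ge

/-- no profitable underbidding in generic games: fix `α > 0`, true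
values `v > 0`, a highest competing bid `P > 0` and the others' bids.  If the truthful
profile `(v_i, b_{-i})` and an underbidding profile `(b_i', b_{-i})` with
`0 < b_i' < v_i` are both generic (`WTP_total ≠ P`), and in each winning scenario a
minimal feasible `P_1` exists and is selected, then member `i`'s collective utility
under truthful bidding is at least that under underbidding. -/
theorem stmt14 (n : ℕ) (α P : ℝ) (hα : 0 < α) (hP : 0 < P)
    (v : Fin n → ℝ) (hv : ∀ j, 0 < v j) (i : Fin n)
    (b : Fin n → ℝ) (hb : ∀ j, 0 < b j)
    (b' : ℝ) (hb'pos : 0 < b') (hb'lt : b' < v i)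
    (B1 B2 : Fin n → ℝ)
    (hB1 : B1 = Function.update b i (v i))
    (hB2 : B2 = Function.update b i b')
    (hgen1 : wtpTotalRF n α B1 ≠ P)
    (hgen2 : wtpTotalRF n α B2 ≠ P)
    (P1a P1b : ℝ)
    (hsel1 : P ≤ wtpTotalRF n α B1 → IsLeast {q : ℝ | FeasibleP1 n α P B1 q} P1a)
    (hsel2 : P ≤ wtpTotalRF n α B2 → IsLeast {q : ℝ | FeasibleP1 n α P B2 q} P1b) :
    utilRF n α v (outX n α B2 P P1b) (outP n α B2 P P1b) i ≤
      utilRF n α v (outX n α B1 P P1a) (outP n α B1 P P1a) i := by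
  subst hB1 hB2
  exact stmt14_general hα.le hP (fun j => (hv j).le)
    (le_update_iff.mpr ⟨hb'pos.le, fun j _ => (hb j).le⟩)
    (update_le_update_iff.mpr ⟨hb'lt.le, fun _ _ => le_rfl⟩) (Function.update_self i (v i) b).le
    (fun hwin => (hsel2 hwin).1) hsel1

end
end
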